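/- arXiv:1001.3923 — 2 statements merged into one kernel-verified Lean document; each statement's English description precedes it below -/
import Mathlib

section
/- Let n ≥ 2, let G ⊊ ℝⁿ be a nonempty open connected proper subset, let x ∈ G and let 0 < r ≤ log(1+√3). Then the j-metric ball B_j(x,r) is close-to-convex. -/
/-- A half-line in a real vector space: `{z + t • y : t > 0}` or `{z + t • y : t ≥ 0}`
for some point `z` and nonzero direction `y`. -/
def IsHalfLine {E : Type*} [AddCommGroup E] [Module ℝ E] (S : Set E) : Prop :=
  ∃ z y : E, y ≠ 0 ∧
    (S = {x | ∃ t : ℝ, 0 < t ∧ x = z + t • y} ∨ S = {x | ∃ t : ℝ, 0 ≤ t ∧ x = z + t • y})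

/-- A set `G` is close-to-convex if its complement is the union of a family of
pairwise disjoint half-lines. -/
def CloseToConvex {E : Type*} [AddCommGroup E] [Module ℝ E] (G : Set E) : Prop :=
  ∃ 𝒞 : Set (Set E), (∀ S ∈ 𝒞, IsHalfLine S) ∧ 𝒞.Pairwise Disjoint ∧ ⋃₀ 𝒞 = Gᶜ

/-- The distance ratio metric (`j`-metric) of a domain `G`:
`j_G(x,y) = log (1 + |x-y| / min (d(x), d(y)))` where `d` is the distance to `∂G`. -/
noncomputable def jDist {E : Type*} [NormedAddCommGroup E] (G : Set E) (x y : E) : ℝ :=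
  Real.log (1 + dist x y / min (Metric.infDist x (frontier G)) (Metric.infDist y (frontier G)))

/-- The `j`-metric ball `B_j(x,r) = {y ∈ G : j_G(x,y) < r}`. -/
def jBall {E : Type*} [NormedAddCommGroup E] (G : Set E) (x : E) (r : ℝ) : Set E :=
  {y ∈ G | jDist G x y < r}

open Set Metric
open scoped RealInnerProductSpace

/-- A set is close-to-convex when the points of its complement carry directions that stay in the
complement and are uniquely determined further along the ray they generate. -/
theorem closeToConvex_of_directions {E : Type*} [AddCommGroup E] [Module ℝ E] {G : Set E}
    (Dir : E → E → Prop) (hex : ∀ y ∉ G, ∃ u, Dir y u) (hne : ∀ y u, Dir y u → u ≠ 0)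
    (hback : ∀ y u, Dir y u → ∃ t : ℝ, ¬ Dir (y - t • u) u)
    (hforw : ∀ y ∉ G, ∀ u, Dir y u → ∀ t : ℝ, 0 < t →
      y + t • u ∉ G ∧ Dir (y + t • u) u ∧ ∀ v, Dir (y + t • u) v → v = u) :
    CloseToConvex G := by
  choose! dir hdir using hex
  have hstep : ∀ y ∉ G, ∀ t : ℝ, 0 < t →
      y + t • dir y ∉ G ∧ dir (y + t • dir y) = dir y := by
    intro y hy t ht
    obtain ⟨h₁, -, h₃⟩ := hforw y hy _ (hdir y hy) t ht
    exact ⟨h₁, h₃ _ (hdir _ h₁)⟩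
  let orbit : E → Set E := fun y => {w | w ∉ G ∧ dir w = dir y ∧ ∃ t : ℝ, w = y + t • dir y}
  have hmem : ∀ y ∉ G, y ∈ orbit y := fun y hy => ⟨hy, rfl, 0, by simp⟩
  have horbit : ∀ y w, w ∈ orbit y → orbit w = orbit y := by
    rintro y w ⟨-, hw, t, rfl⟩
    ext v
    constructor
    · rintro ⟨hv, hvd, s, hs⟩
      refine ⟨hv, hvd.trans hw, t + s, ?_⟩
      rw [hs, hw]; module
    · rintro ⟨hv, hvd, s, hs⟩
      refine ⟨hv, hvd.trans hw.symm, s - t, ?_⟩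
      rw [hs, hw]; module
  refine ⟨{S | ∃ y, y ∉ G ∧ S = orbit y}, ?_, ?_, ?_⟩
  · rintro S ⟨y, hy, rfl⟩
    set u := dir y with hu
    have hu0 : u ≠ 0 := hne y u (hdir y hy)
    let T : Set ℝ := {t | y + t • u ∈ orbit y}
    have hT0 : (0 : ℝ) ∈ T := by simpa [T] using hmem y hy
    have hTup : ∀ s ∈ T, ∀ t, s < t → t ∈ T := by
      rintro s ⟨hs, hsd, -⟩ t hst
      have := hstep _ hs (t - s) (by linarith)
      rw [hsd] at this
      have he : y + s • u + (t - s) • dir y = y + t • u := by rw [← hu]; module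
      rw [he] at this
      exact ⟨this.1, this.2, t, rfl⟩
    obtain ⟨b, hb⟩ := hback y u (hdir y hy)
    have hTb : BddBelow T := by
      refine ⟨-b, fun s hs => ?_⟩
      by_contra hlt
      push Not at hlt
      obtain ⟨h₁, h₂, -⟩ := hTup s hs (-b) hlt
      apply hb
      have := hdir _ h₁
      rw [h₂, ← hu] at this
      convert this using 1
      module
    have horb : orbit y = {x | ∃ t ∈ T, x = y + t • u} := by
      ext v
      constructor
      · rintro ⟨hv, hvd, s, rfl⟩
        exact ⟨s, ⟨hv, hvd, s, rfl⟩, rfl⟩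
      · rintro ⟨t, ht, rfl⟩
        exact ht
    refine ⟨y + sInf T • u, u, hu0, ?_⟩
    by_cases hm : sInf T ∈ T
    · right
      rw [horb]
      ext v
      constructor
      · rintro ⟨t, ht, rfl⟩
        exact ⟨t - sInf T, sub_nonneg.2 (csInf_le hTb ht), by module⟩
      · rintro ⟨t, ht, rfl⟩
        refine ⟨sInf T + t, ?_, by module⟩
        rcases ht.eq_or_lt with rfl | ht
        · simpa using hm
        · exact hTup _ hm _ (by linarith)
    · left
      rw [horb]
      ext v
      constructor
      · rintro ⟨t, ht, rfl⟩
        refine ⟨t - sInf T, sub_pos.2 (lt_of_le_of_ne (csInf_le hTb ht) ?_), by module⟩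
        rintro rfl
        exact hm ht
      · rintro ⟨t, ht, rfl⟩
        refine ⟨sInf T + t, ?_, by module⟩
        obtain ⟨s, hs, hst⟩ := exists_lt_of_csInf_lt ⟨0, hT0⟩ (lt_add_of_pos_right (sInf T) ht)
        exact hTup s hs _ hst
  · rintro S ⟨y, hy, rfl⟩ S' ⟨y', hy', rfl⟩ hSS
    rw [Set.disjoint_left]
    intro w hw hw'
    exact hSS ((horbit y w hw).symm.trans (horbit y' w hw'))
  · ext w
    constructor
    · rintro ⟨S, ⟨y, hy, rfl⟩, hw⟩
      exact hw.1
    · intro hw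
      exact ⟨orbit w, ⟨w, hw, rfl⟩, hmem w hw⟩

/-- A set that is star-shaped about a point is close-to-convex. -/
theorem closeToConvex_of_starConvex {E : Type*} [NormedAddCommGroup E] [NormedSpace ℝ E]
    {G : Set E} {x : E} (hx : x ∈ G) (hG : StarConvex ℝ x G) : CloseToConvex G := by
  refine closeToConvex_of_directions
    (fun y u => ‖u‖ = 1 ∧ ∃ t : ℝ, 0 < t ∧ y = x + t • u) ?_ ?_ ?_ ?_
  · intro y hy
    have hyx : y - x ≠ 0 := sub_ne_zero.2 fun h => hy (h ▸ hx)
    refine ⟨‖y - x‖⁻¹ • (y - x), norm_smul_inv_norm hyx, ‖y - x‖, norm_pos_iff.2 hyx, ?_⟩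
    rw [smul_inv_smul₀ (norm_ne_zero_iff.2 hyx)]
    abel
  · rintro y u ⟨hu, -⟩ rfl
    simp at hu
  · rintro y u ⟨hu, t, ht, rfl⟩
    refine ⟨t, ?_⟩
    rintro ⟨-, s, hs, h⟩
    have : s • u = 0 := by
      have h' : x + t • u - t • u = x := by abel
      rw [h'] at h
      simpa using h
    rcases smul_eq_zero.1 this with h | h
    · exact hs.ne' h
    · simp [h] at hu
  · rintro y hy u ⟨hu, t, ht, rfl⟩ s hs
    refine ⟨fun hmem => hy ?_, ⟨hu, t + s, by linarith, by module⟩, ?_⟩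
    · have := hG hmem (a := s / (t + s)) (b := t / (t + s)) (by positivity) (by positivity)
        (by field_simp; ring)
      convert this using 1
      have h1 : s / (t + s) = 1 - t / (t + s) := by field_simp; ring
      have h2 : t = t / (t + s) * (t + s) := by field_simp
      rw [h1]
      nth_rewrite 1 [h2]
      module
    · rintro v ⟨hv, r, hr, h⟩
      have h' : (t + s) • u = r • v := by
        have : x + (t + s) • u = x + r • v := by rw [← h]; module
        exact add_left_cancel this
      have hn : t + s = r := by
        have := congrArg norm h'
        rwa [norm_smul, norm_smul, hu, hv, mul_one, mul_one, Real.norm_of_nonneg (by linarith),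
          Real.norm_of_nonneg hr.le] at this
      rw [← hn] at h'
      exact (smul_right_injective E (by linarith : t + s ≠ 0) h').symm

/-- Fewer than continuum many translated proper subspaces of `ℝⁿ` do not cover an open set. -/
theorem exists_mem_open_forall_sub_notMem_submodule {n : ℕ} {ι : Type}
    (hι : Cardinal.mk ι < Cardinal.continuum) (P : ι → Submodule ℝ (EuclideanSpace ℝ (Fin n)))
    (hP : ∀ i, P i ≠ ⊤) {W : Set (EuclideanSpace ℝ (Fin n))} (hW : IsOpen W) (hWne : W.Nonempty)
    (p : EuclideanSpace ℝ (Fin n)) : ∃ w ∈ W, ∀ i, w - p ∉ P i := by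
  obtain ⟨w₀, hw₀⟩ := hWne
  let γ : ℝ → EuclideanSpace ℝ (Fin n) :=
    fun τ => w₀ + ∑ k : Fin n, τ ^ ((k : ℕ) + 1) • EuclideanSpace.single k (1 : ℝ)
  have hγ : Continuous γ := by fun_prop
  have hγ0 : γ 0 = w₀ := by simp [γ]
  obtain ⟨ε, hε, hball⟩ := Metric.isOpen_iff.1 (hW.preimage hγ) 0 (by simpa [hγ0] using hw₀)
  have hIoo : ∀ τ ∈ Ioo (0 : ℝ) ε, γ τ ∈ W := by
    intro τ hτ
    exact hball (by simpa [abs_of_pos hτ.1] using hτ.2)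
  by_contra! hcon
  have hcov : ∀ τ : Ioo (0 : ℝ) ε, ∃ i, γ τ - p ∈ P i := fun τ => hcon _ (hIoo τ τ.2)
  choose f hf using hcov
  have hcard : Cardinal.mk (Ioo (0 : ℝ) ε) = Cardinal.continuum := Cardinal.mk_Ioo_real hε
  have : Infinite (Ioo (0 : ℝ) ε) := (Ioo_infinite hε).to_subtype
  obtain ⟨i, hi⟩ := Cardinal.exists_infinite_fiber f (by rwa [hcard])
  obtain ⟨l, hl, hPl⟩ := Submodule.exists_le_ker_of_lt_top (P i) (lt_top_iff_ne_top.2 (hP i))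
  let Q : Polynomial ℝ := Polynomial.C (l (w₀ - p)) +
    ∑ k : Fin n, Polynomial.C (l (EuclideanSpace.single k 1)) * Polynomial.X ^ ((k : ℕ) + 1)
  have hroot : ∀ τ : Ioo (0 : ℝ) ε, f τ = i → Q.IsRoot τ := by
    intro τ hτ
    have h := hPl (hτ ▸ hf τ)
    rw [LinearMap.mem_ker] at h
    have he : γ τ - p = (w₀ - p) +
        ∑ k : Fin n, (τ : ℝ) ^ ((k : ℕ) + 1) • EuclideanSpace.single k (1 : ℝ) := by
      simp only [γ]; abel
    rw [he, map_add, map_sum] at h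
    simp only [map_smul, smul_eq_mul] at h
    simp only [Q, Polynomial.IsRoot, Polynomial.eval_add, Polynomial.eval_C,
      Polynomial.eval_finsetSum, Polynomial.eval_mul, Polynomial.eval_pow, Polynomial.eval_X]
    refine Eq.trans ?_ h
    congr 1
    exact Finset.sum_congr rfl fun k _ => mul_comm _ _
  have hQ : Q = 0 := by
    refine Polynomial.eq_zero_of_infinite_isRoot Q ?_
    refine Set.Infinite.mono ?_ ((Set.infinite_coe_iff.1 hi).image Subtype.val_injective.injOn)
    rintro _ ⟨τ, hτ, rfl⟩
    exact hroot τ hτ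
  apply hl
  refine (EuclideanSpace.basisFun (Fin n) ℝ).toBasis.ext fun k => ?_
  have hk := congrArg (fun q => Polynomial.coeff q ((k : ℕ) + 1)) hQ
  simpa [Q, Polynomial.coeff_X_pow, Polynomial.coeff_C, Fin.val_inj, eq_comm] using hk

/-- In dimension at least three, a set is close-to-convex as soon as every point of its complement
sees an open set of points along rays contained in the complement. -/
theorem closeToConvex_of_forall_exists_open {n : ℕ} (hn : 3 ≤ n)
    {G : Set (EuclideanSpace ℝ (Fin n))}
    (hG : ∀ p ∉ G, ∃ W : Set (EuclideanSpace ℝ (Fin n)), IsOpen W ∧ W.Nonempty ∧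
      ∀ w ∈ W, ∀ t : ℝ, 0 ≤ t → p + t • (w - p) ∉ G) :
    CloseToConvex G := by
  classical
  let E := EuclideanSpace ℝ (Fin n)
  let A : Type := {p : E // p ∉ G}
  let ray : E → E → Set E := fun p v => {w | v ≠ 0 ∧ ∃ t : ℝ, 0 ≤ t ∧ w = p + t • v}
  obtain ⟨r, hr, hord⟩ := Cardinal.exists_ord_eq A
  have hcardA : Cardinal.mk A ≤ Cardinal.continuum := by
    have h1 : Cardinal.mk E ≤ Cardinal.continuum := by
      have : Cardinal.mk E = Cardinal.mk (Fin n → ℝ) :=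
        Cardinal.mk_congr (WithLp.equiv 2 (Fin n → ℝ))
      rw [this]
      simp only [Cardinal.mk_pi, Cardinal.mk_real, Cardinal.prod_const, Cardinal.mk_fin,
        Cardinal.lift_id, Cardinal.power_natCast]
      exact Cardinal.power_nat_le Cardinal.aleph0_le_continuum
    exact (Cardinal.mk_subtype_le _).trans h1
  let Adm : (p : A) → (∀ q : A, r q p → E) → E → Prop := fun p F v =>
    v ≠ 0 ∧ ray p.1 v ⊆ Gᶜ ∧ ∀ (q : A) (hq : r q p), Disjoint (ray p.1 v) (ray q.1 (F q hq))
  let dir : A → E := hr.wf.fix fun p F => if h : ∃ v, Adm p F v then h.choose else 0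
  have hdir : ∀ p, dir p = if h : ∃ v, Adm p (fun q _ => dir q) v then h.choose else 0 :=
    fun p => hr.wf.fix_eq _ p
  have hadm : ∀ p, dir p ≠ 0 → Adm p (fun q _ => dir q) (dir p) := by
    intro p hp
    by_cases h : ∃ v, Adm p (fun q _ => dir q) v
    · rw [hdir p, dif_pos h]
      exact h.choose_spec
    · exact absurd (by rw [hdir p, dif_neg h]) hp
  have hcov : ∀ p : A, dir p ≠ 0 ∨ ∃ q, r q p ∧ p.1 ∈ ray q.1 (dir q) := by
    intro p
    by_contra! hcon
    obtain ⟨h0, hcon⟩ := hcon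
    have hnone : ¬ ∃ v, Adm p (fun q _ => dir q) v := by
      intro h
      apply h.choose_spec.1
      rw [hdir p, dif_pos h] at h0
      exact h0
    apply hnone
    obtain ⟨W, hWo, hWne, hW⟩ := hG p.1 p.2
    let P : {q : A // r q p} → Submodule ℝ E :=
      fun q => Submodule.span ℝ {q.1.1 - p.1, dir q.1}
    have hrank : ∀ S : Submodule ℝ E, Module.finrank ℝ S ≤ 2 → S ≠ ⊤ := by
      rintro S hS rfl
      rw [finrank_top, finrank_euclideanSpace_fin] at hS
      omega
    have hP : ∀ q, P q ≠ ⊤ := by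
      intro q
      apply hrank
      refine (finrank_span_le_card _).trans ?_
      rw [Set.toFinset_insert, Set.toFinset_singleton]
      exact Finset.card_le_two
    have hcard : Cardinal.mk {q : A // r q p} < Cardinal.continuum :=
      (Cardinal.card_typein_lt p hord).trans_le hcardA
    have hW' : ∃ w ∈ W, (∀ q, w - p.1 ∉ P q) ∧ w - p.1 ≠ 0 := by
      let P' : Option {q : A // r q p} → Submodule ℝ E := fun o => o.elim ⊥ P
      have hc' : Cardinal.mk (Option {q : A // r q p}) < Cardinal.continuum := by
        rw [Cardinal.mk_option]
        exact Cardinal.add_lt_of_lt Cardinal.aleph0_le_continuum hcard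
          (Cardinal.one_lt_aleph0.trans Cardinal.aleph0_lt_continuum)
      obtain ⟨w, hw, hwP⟩ := exists_mem_open_forall_sub_notMem_submodule hc' P'
        (by rintro (_ | q); exacts [hrank _ ((finrank_bot ℝ E).le.trans (by norm_num)), hP q])
        hWo hWne p.1
      exact ⟨w, hw, fun q => hwP (some q), fun h => hwP none (by simp [P', h])⟩
    obtain ⟨w, hw, hwP, hw0⟩ := hW'
    refine ⟨w - p.1, hw0, ?_, ?_⟩
    · rintro _ ⟨-, t, ht, rfl⟩
      exact hW w hw t ht
    · intro q hq
      rw [Set.disjoint_left]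
      rintro v ⟨-, t, ht, rfl⟩ ⟨hq0, s, hs, hv⟩
      have hmul : t • (w - p.1) = (q.1 - p.1) + s • dir q := by
        have : t • (w - p.1) = (p.1 + t • (w - p.1)) - p.1 := by abel
        rw [this, hv]; abel
      rcases ht.eq_or_lt with rfl | ht
      · exact hcon q hq ⟨hq0, s, hs, by simpa using hv⟩
      · apply hwP ⟨q, hq⟩
        have h1 : t • (w - p.1) ∈ P ⟨q, hq⟩ := by
          rw [hmul]
          exact add_mem (Submodule.subset_span (by simp))
            (Submodule.smul_mem _ _ (Submodule.subset_span (by simp)))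
        exact (Submodule.smul_mem_iff _ ht.ne').1 h1
  refine ⟨{S | ∃ p : A, dir p ≠ 0 ∧ S = ray p.1 (dir p)}, ?_, ?_, ?_⟩
  · rintro S ⟨p, hp, rfl⟩
    exact ⟨p.1, dir p, hp, Or.inr (Set.ext fun w => ⟨fun h => h.2, fun h => ⟨hp, h⟩⟩)⟩
  · rintro S ⟨p, hp, rfl⟩ S' ⟨q, hq, rfl⟩ hne
    rcases trichotomous_of r p q with h | rfl | h
    · exact ((hadm q hq).2.2 p h).symm
    · exact absurd rfl hne
    · exact (hadm p hp).2.2 q h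
  · ext w
    constructor
    · rintro ⟨S, ⟨p, hp, rfl⟩, hw⟩
      exact (hadm p hp).2.1 hw
    · intro hw
      rcases hcov ⟨w, hw⟩ with h | ⟨q, -, hq⟩
      · exact ⟨_, ⟨⟨w, hw⟩, h, rfl⟩, h, 0, le_rfl, by simp⟩
      · exact ⟨_, ⟨q, hq.1, rfl⟩, hq⟩

theorem IsPreconnected.inter_frontier_nonempty_of_mem_of_notMem {X : Type*} [TopologicalSpace X]
    {s G : Set X} (hs : IsPreconnected s) {x y : X} (hxs : x ∈ s) (hys : y ∈ s) (hx : x ∈ G)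
    (hy : y ∉ G) : (s ∩ frontier G).Nonempty := by
  by_contra hemp
  have hinterior : ∀ z ∈ s, z ∈ closure G → z ∈ interior G := fun z hz hzG =>
    by_contra fun h => hemp ⟨z, hz, hzG, h⟩
  obtain ⟨z, -, hz₁, hz₂⟩ := hs (interior G) (closure G)ᶜ isOpen_interior
    isClosed_closure.isOpen_compl
    (fun z hz => (em (z ∈ closure G)).imp (hinterior z hz) id)
    ⟨x, hxs, hinterior x hxs (subset_closure hx)⟩
    ⟨y, hys, fun h => hy (interior_subset (hinterior y hys h))⟩
  exact hz₂ (subset_closure (interior_subset hz₁))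

/-- The `j`-metric ball of radius `log (1 + R)` around `x`, described through the closed set `Z`
that plays the role of the boundary. -/
def jRegion {E : Type*} [NormedAddCommGroup E] (Z : Set E) (x : E) (R : ℝ) : Set E :=
  {y | dist x y < R * infDist x Z ∧ dist x y < R * infDist y Z}

theorem jBall_eq_jRegion {E : Type*} [NormedAddCommGroup E] [NormedSpace ℝ E] {G : Set E}
    (hG : IsOpen G) (hne : G ≠ univ) {x : E} (hx : x ∈ G) {r : ℝ}
    (hr : Real.exp r - 1 < 2) : jBall G x r = jRegion (frontier G) x (Real.exp r - 1) := by
  have hfr : (frontier G).Nonempty := nonempty_frontier_iff.2 ⟨⟨x, hx⟩, hne⟩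
  have hpos : ∀ y ∈ G, 0 < infDist y (frontier G) := by
    intro y hy
    refine (isClosed_frontier.notMem_iff_infDist_pos hfr).1 fun h => ?_
    exact h.2 (by rwa [hG.interior_eq])
  have key : ∀ y ∈ G, jDist G x y < r ↔ dist x y < (Real.exp r - 1) * infDist x (frontier G) ∧
      dist x y < (Real.exp r - 1) * infDist y (frontier G) := by
    intro y hy
    have hm : 0 < min (infDist x (frontier G)) (infDist y (frontier G)) :=
      lt_min (hpos x hx) (hpos y hy)
    have hq : 0 ≤ dist x y / min (infDist x (frontier G)) (infDist y (frontier G)) :=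
      div_nonneg dist_nonneg hm.le
    rw [jDist, Real.log_lt_iff_lt_exp (by linarith), ← lt_sub_iff_add_lt', div_lt_iff₀ hm]
    rcases le_or_gt (Real.exp r - 1) 0 with hR | hR
    · constructor
      · intro h
        exact absurd (h.trans_le (mul_nonpos_of_nonpos_of_nonneg hR hm.le)) dist_nonneg.not_gt
      · rintro ⟨h, -⟩
        exact absurd (h.trans_le (mul_nonpos_of_nonpos_of_nonneg hR (hpos x hx).le))
          dist_nonneg.not_gt
    · rw [mul_min_of_nonneg _ _ hR.le, lt_min_iff]
  ext y
  refine ⟨fun h => (key y h.1).1 h.2, fun h => ?_⟩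
  suffices hy : y ∈ G from ⟨hy, (key y hy).2 h⟩
  by_contra hy
  obtain ⟨z, hzs, hz⟩ := (convex_segment x y).isPreconnected
    |>.inter_frontier_nonempty_of_mem_of_notMem (left_mem_segment ℝ x y)
      (right_mem_segment ℝ x y) hx hy
  have h₁ := infDist_le_dist_of_mem (x := x) hz
  have h₂ := infDist_le_dist_of_mem (x := y) hz
  have h₃ := dist_add_dist_of_mem_segment hzs
  rw [dist_comm y z] at h₂
  have h₄ : 0 ≤ dist x y := dist_nonneg
  have h₅ : 0 ≤ infDist x (frontier G) := infDist_nonneg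
  have h₆ : 0 ≤ infDist y (frontier G) := infDist_nonneg
  obtain ⟨h₇, h₈⟩ := h
  nlinarith

theorem starConvex_jRegion {E : Type*} [NormedAddCommGroup E] [NormedSpace ℝ E] (Z : Set E) (x : E)
    {R : ℝ} (hR0 : 0 ≤ R) (hR : R ≤ 1) : StarConvex ℝ x (jRegion Z x R) := by
  rintro y ⟨h₁, h₂⟩ a b ha hb hab
  have hD : 0 ≤ dist x y := dist_nonneg
  have e₁ : dist x (a • x + b • y) = b * dist x y := by
    rw [dist_eq_norm, dist_eq_norm, ← abs_of_nonneg hb, ← Real.norm_eq_abs, ← norm_smul,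
      Real.norm_of_nonneg hb]
    congr 1
    obtain rfl : a = 1 - b := by linarith
    module
  have e₂ : dist y (a • x + b • y) = a * dist x y := by
    rw [dist_comm x y, dist_eq_norm, dist_eq_norm, ← abs_of_nonneg ha, ← Real.norm_eq_abs,
      ← norm_smul, Real.norm_of_nonneg ha]
    congr 1
    obtain rfl : b = 1 - a := by linarith
    module
  have h₃ := infDist_le_infDist_add_dist (s := Z) (x := y) (y := a • x + b • y)
  rw [e₂] at h₃
  refine ⟨?_, ?_⟩
  · rw [e₁]; nlinarith
  · rw [e₁]
    have h₄ : R * infDist y Z ≤ R * (infDist (a • x + b • y) Z + a * dist x y) :=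
      mul_le_mul_of_nonneg_left h₃ hR0
    have h₅ : R * (a * dist x y) ≤ a * dist x y :=
      mul_le_of_le_one_left (by positivity) hR
    obtain rfl : b = 1 - a := by linarith
    nlinarith

theorem apollonius_identity {E : Type*} [NormedAddCommGroup E] [InnerProductSpace ℝ E] (x y z : E)
    {R : ℝ} (hR : 1 < R) :
    (R ^ 2 - 1) * (dist y (x + (R ^ 2 / (R ^ 2 - 1)) • (z - x)) ^ 2 -
      (R / (R ^ 2 - 1) * dist z x) ^ 2) = (R * dist y z) ^ 2 - dist y x ^ 2 := by
  have hR2 : R ^ 2 - 1 ≠ 0 := by nlinarith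
  have e₁ : y - (x + (R ^ 2 / (R ^ 2 - 1)) • (z - x)) =
    (y - x) - (R ^ 2 / (R ^ 2 - 1)) • (z - x) := by abel
  have e₂ : y - z = (y - x) - (z - x) := by abel
  simp only [dist_eq_norm, e₁, e₂, mul_pow]
  rw [norm_sub_sq_real (y - x), norm_sub_sq_real (y - x), norm_smul, inner_smul_right,
    mul_pow, Real.norm_eq_abs, sq_abs]
  field_simp
  ring

/-- The points whose distance to `x` is at least `R` times the distance to `z` form a ball. -/
theorem mul_dist_le_dist_iff {E : Type*} [NormedAddCommGroup E] [InnerProductSpace ℝ E]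
    (x y z : E) {R : ℝ} (hR : 1 < R) : R * dist y z ≤ dist y x ↔
      dist y (x + (R ^ 2 / (R ^ 2 - 1)) • (z - x)) ≤ R / (R ^ 2 - 1) * dist z x := by
  have hR2 : 0 < R ^ 2 - 1 := by nlinarith
  have h := apollonius_identity x y z hR
  rw [← sq_le_sq₀ (by positivity) dist_nonneg, ← sq_le_sq₀ dist_nonneg (by positivity),
    ← sub_nonpos, ← h, ← sub_nonpos (b := (_ * dist z x) ^ 2)]
  exact ⟨fun h => by nlinarith, fun h => by nlinarith⟩

theorem closeToConvex_jRegion_of_three_le {n : ℕ} (hn : 3 ≤ n)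
    {Z : Set (EuclideanSpace ℝ (Fin n))} (hZ : IsClosed Z) (hZne : Z.Nonempty)
    {x : EuclideanSpace ℝ (Fin n)} (hx : x ∉ Z) {R : ℝ} (hR : 1 < R) (hR2 : R < 2) :
    CloseToConvex (jRegion Z x R) := by
  have hd : 0 < infDist x Z := (hZ.notMem_iff_infDist_pos hZne).1 hx
  refine closeToConvex_of_forall_exists_open hn fun p hp => ?_
  rcases le_or_gt (R * infDist x Z) (dist p x) with hfar | hnear
  · have hpx : p ≠ x := by
      rintro rfl
      rw [dist_self] at hfar
      nlinarith
    have hpx' : 0 < ‖p - x‖ := norm_pos_iff.2 (sub_ne_zero.2 hpx)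
    refine ⟨{w | 0 < ⟪p - x, w - p⟫}, isOpen_lt (by fun_prop) (by fun_prop),
      ⟨p + (p - x), ?_⟩, ?_⟩
    · rw [mem_ofPred_eq, add_sub_cancel_left, real_inner_self_eq_norm_sq]
      positivity
    · rintro w hw t ht ⟨h, -⟩
      apply h.not_ge
      refine hfar.trans ?_
      rw [dist_comm x, dist_eq_norm, dist_eq_norm,
        show p + t • (w - p) - x = (p - x) + t • (w - p) by abel, ← sq_le_sq₀ (by positivity)
        (by positivity), norm_add_sq_real, inner_smul_right]
      have : 0 ≤ t * ⟪p - x, w - p⟫ := mul_nonneg ht (le_of_lt hw)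
      nlinarith [sq_nonneg ‖t • (w - p)‖]
  · obtain ⟨z, hz, hzp⟩ := hZ.exists_infDist_eq_dist hZne p
    have hpz : R * dist p z ≤ dist p x := by
      by_contra! h
      refine hp ⟨by rwa [dist_comm], by rwa [dist_comm, hzp]⟩
    have hzx : infDist x Z ≤ dist z x := by
      rw [dist_comm]; exact infDist_le_dist_of_mem hz
    refine ⟨{w | R * dist w z < dist w x} ∩ {w | R * infDist x Z < dist w x},
      (isOpen_lt (by fun_prop) (by fun_prop)).inter (isOpen_lt (by fun_prop) (by fun_prop)),
      ?_, ?_⟩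
    · obtain ⟨l, hl₁, hl₂⟩ : ∃ l, R < l ∧ l < R / (R - 1) := by
        refine exists_between ?_
        rw [lt_div_iff₀ (by linarith)]
        nlinarith
      rw [lt_div_iff₀ (by linarith)] at hl₂
      have e₁ : dist (x + l • (z - x)) x = l * dist z x := by
        rw [dist_eq_norm, add_sub_cancel_left, norm_smul, Real.norm_of_nonneg (by linarith),
          dist_eq_norm]
      have e₂ : dist (x + l • (z - x)) z = (l - 1) * dist z x := by
        rw [dist_eq_norm, show x + l • (z - x) - z = (l - 1) • (z - x) by module, norm_smul,
          Real.norm_of_nonneg (by linarith), dist_eq_norm]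
      refine ⟨x + l • (z - x), ?_, ?_⟩
      · rw [mem_ofPred_eq, e₁, e₂]
        nlinarith
      · rw [mem_ofPred_eq, e₁]
        nlinarith
    · rintro w ⟨hw₁, hw₂⟩ t ht ⟨h₁, h₂⟩
      rw [dist_comm] at h₁ h₂
      rcases le_or_gt t 1 with ht1 | ht1
      · have hpD := (mul_dist_le_dist_iff x p z hR).1 hpz
        have hwD := (mul_dist_le_dist_iff x w z hR).1 (le_of_lt hw₁)
        have hD := (convex_closedBall _ _).add_smul_sub_mem hpD hwD ⟨ht, ht1⟩
        have := (mul_dist_le_dist_iff x _ z hR).2 hD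
        have h₃ := infDist_le_dist_of_mem (x := p + t • (w - p)) hz
        nlinarith
      · have hconv := (convex_ball x (R * infDist x Z)).add_smul_sub_mem
          (x := p) (y := p + t • (w - p)) hnear h₁ (t := t⁻¹)
          ⟨by positivity, inv_le_one_of_one_le₀ ht1.le⟩
        rw [add_sub_cancel_left, smul_smul, inv_mul_cancel₀ (by linarith), one_smul,
          add_sub_cancel] at hconv
        exact lt_asymm hw₂ (mem_ball.1 hconv)

section OuterNormal

variable {E : Type*} [NormedAddCommGroup E] [InnerProductSpace ℝ E]

/-- `u` is a unit outer normal of the set `M` at its point `p`. -/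
structure IsOuterNormal (M : Set E) (p u : E) : Prop where
  norm_eq : ‖u‖ = 1
  mem : p ∈ M
  inner_le : ∀ w ∈ M, ⟪u, w⟫ ≤ ⟪u, p⟫

theorem inner_self_of_norm_eq_one {u : E} (hu : ‖u‖ = 1) : ⟪u, u⟫ = 1 := by
  rw [real_inner_self_eq_norm_sq, hu, one_pow]

theorem inner_lt_of_mem_interior {M : Set E} {u y : E} (hu : u ≠ 0) (hy : y ∈ interior M) {a : ℝ}
    (h : ∀ w ∈ M, ⟪u, w⟫ ≤ a) : ⟪u, y⟫ < a := by
  obtain ⟨ε, hε, hball⟩ := Metric.isOpen_iff.1 isOpen_interior y hy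
  have hu' : 0 < ‖u‖ := norm_pos_iff.2 hu
  have hmem : y + (ε / 2 / ‖u‖) • u ∈ M := by
    apply interior_subset
    apply hball
    rw [mem_ball, dist_eq_norm, add_sub_cancel_left, norm_smul, Real.norm_of_nonneg (by positivity),
      div_mul_cancel₀ _ hu'.ne']
    linarith
  have := h _ hmem
  rw [inner_add_right, inner_smul_right, real_inner_self_eq_norm_sq] at this
  have : 0 < ε / 2 / ‖u‖ * ‖u‖ ^ 2 := by positivity
  linarith

theorem exists_unit_forall_inner_le [CompleteSpace E] {M : Set E} (hM : Convex ℝ M)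
    (hne : (interior M).Nonempty) {g : E} (hg : g ∉ interior M) :
    ∃ u : E, ‖u‖ = 1 ∧ ∀ w ∈ M, ⟪u, w⟫ ≤ ⟪u, g⟫ := by
  obtain ⟨f, hf⟩ := geometric_hahn_banach_open_point hM.interior isOpen_interior hg
  set v := (InnerProductSpace.toDual ℝ E).symm f with hv
  have hfv : ∀ w, ⟪v, w⟫ = f w := fun w => InnerProductSpace.toDual_symm_apply
  have hv0 : v ≠ 0 := by
    obtain ⟨m, hm⟩ := hne
    intro h
    have := hf m hm
    rw [← hfv, ← hfv, h, inner_zero_left, inner_zero_left] at this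
    exact lt_irrefl _ this
  refine ⟨‖v‖⁻¹ • v, norm_smul_inv_norm hv0, fun w hw => ?_⟩
  have hw' : w ∈ closure (interior M) := by
    rw [hM.closure_interior_eq_closure_of_nonempty_interior hne]
    exact subset_closure hw
  have hclosed : IsClosed {w | f w ≤ f g} := isClosed_le (by fun_prop) (by fun_prop)
  have := closure_minimal (fun w hw => (hf w hw).le) hclosed hw'
  rw [real_inner_smul_left, real_inner_smul_left, hfv, hfv]
  exact mul_le_mul_of_nonneg_left this (by positivity)

theorem IsOuterNormal.ne_zero {M : Set E} {p u : E} (h : IsOuterNormal M p u) : u ≠ 0 := by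
  rintro rfl
  simpa using h.norm_eq

theorem IsOuterNormal.add_smul_notMem_interior {M : Set E} {p u : E} (h : IsOuterNormal M p u)
    {t : ℝ} (ht : 0 ≤ t) : p + t • u ∉ interior M := by
  intro hy
  have := inner_lt_of_mem_interior h.ne_zero hy h.inner_le
  rw [inner_add_right, inner_smul_right, inner_self_of_norm_eq_one h.norm_eq] at this
  linarith

/-- The nearest point projection onto `M` is unique. -/
theorem IsOuterNormal.eq_of_add_smul_eq {M : Set E} {p u p' u' : E} (h : IsOuterNormal M p u)
    (h' : IsOuterNormal M p' u') {t t' : ℝ} (ht : 0 ≤ t) (ht' : 0 ≤ t')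
    (heq : p + t • u = p' + t' • u') : p = p' := by
  have e : p - p' = t' • u' - t • u := by
    rw [sub_eq_sub_iff_add_eq_add, heq]; abel
  have h₁ := h.inner_le p' h'.mem
  have h₂ := h'.inner_le p h.mem
  have h₃ : ‖p - p'‖ ^ 2 = t' * (⟪u', p⟫ - ⟪u', p'⟫) - t * (⟪u, p⟫ - ⟪u, p'⟫) := by
    rw [← real_inner_self_eq_norm_sq]
    nth_rewrite 1 [e]
    rw [inner_sub_left, real_inner_smul_left, real_inner_smul_left, inner_sub_right,
      inner_sub_right]
  have h₄ : ‖p - p'‖ ^ 2 ≤ 0 := by nlinarith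
  have h₅ : ‖p - p'‖ = 0 := by nlinarith [norm_nonneg (p - p')]
  exact sub_eq_zero.1 (norm_eq_zero.1 h₅)

theorem IsOuterNormal.eq_normal_of_add_smul_eq {M : Set E} {p u p' u' : E}
    (h : IsOuterNormal M p u) (h' : IsOuterNormal M p' u') {t t' : ℝ} (ht : 0 < t) (ht' : 0 ≤ t')
    (heq : p + t • u = p' + t' • u') : u' = u := by
  obtain rfl := h.eq_of_add_smul_eq h' ht.le ht' heq
  have h₁ : t • u = t' • u' := add_left_cancel heq
  have h₂ : t = t' := by
    have := congrArg norm h₁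
    rwa [norm_smul, norm_smul, h.norm_eq, h'.norm_eq, Real.norm_of_nonneg ht.le,
      Real.norm_of_nonneg ht', mul_one, mul_one] at this
  subst h₂
  exact (smul_right_injective E ht.ne' h₁).symm

theorem exists_isOuterNormal_add_smul [CompleteSpace E] {M : Set E} (hM : Convex ℝ M)
    (hcl : IsClosed M) (hne : (interior M).Nonempty) {y : E} (hy : y ∉ interior M) :
    ∃ p u, ∃ t : ℝ, 0 ≤ t ∧ y = p + t • u ∧ IsOuterNormal M p u := by
  by_cases hyM : y ∈ M
  · obtain ⟨u, hu, h⟩ := exists_unit_forall_inner_le hM hne hy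
    exact ⟨y, u, 0, le_rfl, by simp, hu, hyM, h⟩
  · obtain ⟨p, hp, hinf⟩ := exists_norm_eq_iInf_of_complete_convex (hne.mono interior_subset)
      hcl.isComplete hM y
    rw [norm_eq_iInf_iff_real_inner_le_zero hM hp] at hinf
    have hyp : y - p ≠ 0 := by
      rw [sub_ne_zero]
      rintro rfl
      exact hyM hp
    have hyp' : ‖y - p‖ ≠ 0 := norm_ne_zero_iff.2 hyp
    refine ⟨p, ‖y - p‖⁻¹ • (y - p), ‖y - p‖, norm_nonneg _, ?_, norm_smul_inv_norm hyp, hp, ?_⟩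
    · rw [smul_smul, mul_inv_cancel₀ hyp', one_smul, add_sub_cancel]
    · intro w hw
      rw [← sub_nonpos, ← inner_sub_right, real_inner_smul_left]
      exact mul_nonpos_of_nonneg_of_nonpos (by positivity) (hinf w hw)

theorem dist_add_smul_lt {u p c : E} (hu : ‖u‖ = 1) {s : ℝ} (hs : 0 < s)
    (h : ⟪u, p⟫ + s ≤ ⟪u, c⟫) : dist (p + s • u) c < dist p c := by
  rw [dist_eq_norm, dist_eq_norm, ← sq_lt_sq₀ (norm_nonneg _) (norm_nonneg _),
    show p + s • u - c = (p - c) + s • u by abel, norm_add_sq_real, norm_smul, hu,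
    inner_smul_right, real_inner_comm, inner_sub_right, Real.norm_of_nonneg hs.le]
  nlinarith

/-- Moving in direction `u` pushes nearest points in direction `u`. -/
theorem inner_le_inner_of_dist_le {u y z z' : E} {t : ℝ} (ht : 0 < t)
    (h : dist y z ≤ dist y z') (h' : dist (y + t • u) z' ≤ dist (y + t • u) z) :
    ⟪u, z⟫ ≤ ⟪u, z'⟫ := by
  rw [dist_eq_norm, dist_eq_norm, ← sq_le_sq₀ (norm_nonneg _) (norm_nonneg _)] at h h'
  have e : ∀ w : E, ‖y + t • u - w‖ ^ 2 =
      ‖y - w‖ ^ 2 + 2 * (t * (⟪u, y⟫ - ⟪u, w⟫)) + ‖t • u‖ ^ 2 := by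
    intro w
    rw [show y + t • u - w = (y - w) + t • u by abel, norm_add_sq_real, inner_smul_right,
      real_inner_comm, inner_sub_right]
  rw [e, e] at h'
  nlinarith

variable [FiniteDimensional ℝ E] {B : Set E}

theorem exists_mem_closure_inner_le (hB : Bornology.IsBounded B) {e : E}
    (he : e ∈ closure (convexHull ℝ B)) (v : E) : ∃ b ∈ closure B, ⟪v, e⟫ ≤ ⟪v, b⟫ := by
  have : ProperSpace E := FiniteDimensional.proper ℝ E
  have hBne : (closure B).Nonempty :=
    (convexHull_nonempty_iff.1 (closure_nonempty_iff.1 ⟨e, he⟩)).closure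
  obtain ⟨b, hb, hmax⟩ := hB.isCompact_closure.exists_isMaxOn hBne
    (f := fun w => ⟪v, w⟫) (by fun_prop)
  refine ⟨b, hb, ?_⟩
  have hconv : Convex ℝ {w | ⟪v, w⟫ ≤ ⟪v, b⟫} :=
    convex_halfSpace_le (innerₛₗ ℝ v).isLinear _
  have hclosed : IsClosed {w | ⟪v, w⟫ ≤ ⟪v, b⟫} := isClosed_le (by fun_prop) (by fun_prop)
  exact closure_minimal (convexHull_min (fun w hw => hmax (subset_closure hw)) hconv) hclosed he

theorem exists_mem_closure_inner_eq (hB : Bornology.IsBounded B) {e u : E}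
    (he : IsOuterNormal (closure (convexHull ℝ B)) e u) (v : E) :
    ∃ b ∈ closure B, ⟪u, b⟫ = ⟪u, e⟫ ∧ ⟪v, e⟫ ≤ ⟪v, b⟫ := by
  have : ProperSpace E := FiniteDimensional.proper ℝ E
  have hsub : closure B ⊆ closure (convexHull ℝ B) := closure_mono (subset_convexHull ℝ B)
  have hK : IsCompact (closure B ∩ {b | ⟪v, e⟫ ≤ ⟪v, b⟫}) :=
    hB.isCompact_closure.inter_right (isClosed_le (by fun_prop) (by fun_prop))
  obtain ⟨b₀, hb₀, hvb₀⟩ := exists_mem_closure_inner_le hB he.mem v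
  obtain ⟨b, ⟨hb, hvb⟩, hmax⟩ := hK.exists_isMaxOn ⟨b₀, hb₀, hvb₀⟩ (f := fun w => ⟪u, w⟫)
    (by fun_prop)
  refine ⟨b, hb, ?_, hvb⟩
  by_contra hne
  have hlt : ⟪u, b⟫ < ⟪u, e⟫ := lt_of_le_of_ne (he.inner_le b (hsub hb)) hne
  obtain ⟨b₁, -, hb₁⟩ := hB.isCompact_closure.exists_isMaxOn ⟨b₀, hb₀⟩ (f := fun w => ⟪v, w⟫)
    (by fun_prop)
  have hC : 0 < ⟪v, b₁⟫ - ⟪v, e⟫ + 1 := by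
    have : ⟪v, b⟫ ≤ ⟪v, b₁⟫ := hb₁ hb
    have : ⟪v, e⟫ ≤ ⟪v, b⟫ := hvb
    linarith
  obtain ⟨ε, hε, hεC⟩ : ∃ ε : ℝ, 0 < ε ∧ ε * (⟪v, b₁⟫ - ⟪v, e⟫ + 1) = ⟪u, e⟫ - ⟪u, b⟫ :=
    ⟨(⟪u, e⟫ - ⟪u, b⟫) / _, div_pos (by linarith) hC, div_mul_cancel₀ _ hC.ne'⟩
  obtain ⟨w, hw, hle⟩ := exists_mem_closure_inner_le hB he.mem (u + ε • v)
  rw [inner_add_left, inner_add_left, real_inner_smul_left, real_inner_smul_left] at hle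
  have h₁ := he.inner_le w (hsub hw)
  have h₂ : ⟪v, e⟫ ≤ ⟪v, w⟫ := by
    by_contra! h
    nlinarith
  have h₃ : ⟪u, w⟫ ≤ ⟪u, b⟫ := hmax ⟨hw, h₂⟩
  have h₄ : ⟪v, w⟫ ≤ ⟪v, b₁⟫ := hb₁ hw
  nlinarith

end OuterNormal

section Plane

theorem exists_unit_perp {u : EuclideanSpace ℝ (Fin 2)} (hu : ‖u‖ = 1) :
    ∃ η : EuclideanSpace ℝ (Fin 2), ‖η‖ = 1 ∧ ⟪u, η⟫ = 0 ∧ ∀ v, v = ⟪u, v⟫ • u + ⟪η, v⟫ • η := by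
  have h : u 0 ^ 2 + u 1 ^ 2 = 1 := by
    have := EuclideanSpace.real_norm_sq_eq u
    rw [hu, Fin.sum_univ_two] at this
    linarith
  refine ⟨!₂[-u 1, u 0], ?_, ?_, fun v => ?_⟩
  · rw [EuclideanSpace.norm_eq, Fin.sum_univ_two, Real.sqrt_eq_one]
    simp
    linarith
  · simp [PiLp.inner_apply, Fin.sum_univ_two]
    ring
  · ext i
    fin_cases i
    · simp [PiLp.inner_apply, Fin.sum_univ_two]
      linear_combination (-v 0) * h
    · simp [PiLp.inner_apply, Fin.sum_univ_two]
      linear_combination (-v 1) * h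

variable {B : Set (EuclideanSpace ℝ (Fin 2))} {c e u : EuclideanSpace ℝ (Fin 2)} {ρ : ℝ}

/-- If a disc misses `B` but its interior meets a supporting line of the closed convex hull of `B`
inside this hull, then the hull contains the whole chord cut out by the disc. -/
theorem IsOuterNormal.chord_mem (hB : Bornology.IsBounded B)
    (he : IsOuterNormal (closure (convexHull ℝ B)) e u) (hec : dist e c < ρ)
    (hBc : ∀ b ∈ B, ρ < dist b c) {h : EuclideanSpace ℝ (Fin 2)} (hu : ⟪u, h⟫ = ⟪u, e⟫)
    (hc : dist h c ≤ ρ) : h ∈ closure (convexHull ℝ B) := by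
  by_cases hhe : h = e
  · rw [hhe]; exact he.mem
  obtain ⟨b, hb, hub, hvb⟩ := exists_mem_closure_inner_eq hB he (h - e)
  have hbM : b ∈ closure (convexHull ℝ B) := closure_mono (subset_convexHull ℝ B) hb
  have hbc : ρ ≤ dist b c := by
    have hcl : IsClosed {b | ρ ≤ dist b c} := isClosed_le (by fun_prop) (by fun_prop)
    exact closure_minimal (fun b hb => (hBc b hb).le) hcl hb
  obtain ⟨η, hη, -, hdec⟩ := exists_unit_perp he.norm_eq
  have hα : h - e = ⟪η, h - e⟫ • η := by
    have := hdec (h - e)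
    rwa [inner_sub_right, hu, sub_self, zero_smul, zero_add] at this
  have hβ : b - e = ⟪η, b - e⟫ • η := by
    have := hdec (b - e)
    rwa [inner_sub_right, hub, sub_self, zero_smul, zero_add] at this
  set α := ⟪η, h - e⟫ with hα'
  set β := ⟪η, b - e⟫ with hβ'
  have hα0 : α ≠ 0 := by
    intro h0
    rw [h0, zero_smul, sub_eq_zero] at hα
    exact hhe hα
  have hαβ : 0 ≤ α * β := by
    rw [← sub_nonneg, ← inner_sub_right, hα, real_inner_smul_left] at hvb
    exact hvb
  have hbe : b = e + (β / α) • (h - e) := by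
    rw [hα, smul_smul, div_mul_cancel₀ _ hα0, ← hβ, add_sub_cancel]
  have hs : 0 ≤ β / α := by
    have : β / α = α * β / α ^ 2 := by field_simp
    rw [this]; positivity
  rcases lt_or_ge (β / α) 1 with hs1 | hs1
  · exfalso
    apply hbc.not_gt
    rw [hbe, dist_eq_norm, show e + (β / α) • (h - e) - c =
      (1 - β / α) • (e - c) + (β / α) • (h - c) by module]
    refine (norm_add_le _ _).trans_lt ?_
    rw [norm_smul, norm_smul, Real.norm_of_nonneg hs, Real.norm_of_nonneg (by linarith),
      ← dist_eq_norm, ← dist_eq_norm]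
    nlinarith
  · have hconv : Convex ℝ (closure (convexHull ℝ B)) := (convex_convexHull ℝ B).closure
    have := hconv.add_smul_sub_mem he.mem hbM (t := (β / α)⁻¹)
      ⟨by positivity, inv_le_one_of_one_le₀ hs1⟩
    rwa [hbe, add_sub_cancel_left, smul_smul, inv_mul_cancel₀ (by linarith), one_smul,
      add_sub_cancel] at this

theorem eq_or_eq_neg_of_inner_perp_eq_zero {u u' η : EuclideanSpace ℝ (Fin 2)} (hu : ‖u‖ = 1)
    (hu' : ‖u'‖ = 1) (hdec : ∀ v, v = ⟪u, v⟫ • u + ⟪η, v⟫ • η) (h : ⟪η, u'⟫ = 0) :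
    u' = u ∨ u' = -u := by
  have e := hdec u'
  rw [h, zero_smul, add_zero] at e
  have hn := congrArg norm e
  rw [norm_smul, hu, hu', mul_one, Real.norm_eq_abs] at hn
  rcases (abs_eq zero_le_one).1 hn.symm with hC | hC
  · left; rw [e, hC, one_smul]
  · right; rw [e, hC, neg_one_smul]

/-- A point of the hull inside the open disc has only one outer normal. -/
theorem IsOuterNormal.eq_of_dist_lt (hB : Bornology.IsBounded B)
    (hinterior : (interior (closure (convexHull ℝ B))).Nonempty)
    (he : IsOuterNormal (closure (convexHull ℝ B)) e u) (hec : dist e c < ρ)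
    (hBc : ∀ b ∈ B, ρ < dist b c) {u' : EuclideanSpace ℝ (Fin 2)}
    (he' : IsOuterNormal (closure (convexHull ℝ B)) e u') : u' = u := by
  obtain ⟨η, hη, huη, hdec⟩ := exists_unit_perp he.norm_eq
  have hmem : ∀ s : ℝ, |s| ≤ ρ - dist e c → e + s • η ∈ closure (convexHull ℝ B) := by
    intro s hs
    refine he.chord_mem hB hec hBc ?_ ?_
    · rw [inner_add_right, inner_smul_right, huη, mul_zero, add_zero]
    · have := dist_triangle (e + s • η) e c
      rw [dist_eq_norm (e + s • η) e, add_sub_cancel_left, norm_smul, hη, Real.norm_eq_abs] at this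
      linarith
  have hδ : 0 < ρ - dist e c := by linarith
  have h₁ := he'.inner_le _ (hmem (ρ - dist e c) (abs_of_pos hδ).le)
  have h₂ := he'.inner_le _ (hmem (-(ρ - dist e c)) (by rw [abs_neg, abs_of_pos hδ]))
  rw [inner_add_right, inner_smul_right] at h₁ h₂
  have h₀ : ⟪η, u'⟫ = 0 := by
    rw [real_inner_comm]
    nlinarith
  refine (eq_or_eq_neg_of_inner_perp_eq_zero he.norm_eq he'.norm_eq hdec h₀).resolve_right ?_
  rintro rfl
  obtain ⟨m, hm⟩ := hinterior
  have h₃ := inner_lt_of_mem_interior he.ne_zero hm he.inner_le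
  have h₄ := inner_lt_of_mem_interior he'.ne_zero hm he'.inner_le
  rw [inner_neg_left, inner_neg_left] at h₄
  linarith

theorem IsOuterNormal.exists_inner_sub_add_mul_abs_le (hB : Bornology.IsBounded B)
    (he : IsOuterNormal (closure (convexHull ℝ B)) e u) (hec : dist e c < ρ)
    (hBc : ∀ b ∈ B, ρ < dist b c) (huc : ⟪u, e⟫ ≤ ⟪u, c⟫) {e' u' : EuclideanSpace ℝ (Fin 2)}
    (he' : IsOuterNormal (closure (convexHull ℝ B)) e' u') :
    ∃ l > 0, ∀ η : EuclideanSpace ℝ (Fin 2), ‖η‖ = 1 → ⟪u, η⟫ = 0 →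
      ⟪u', c⟫ - ⟪u', e'⟫ + l * |⟪η, u'⟫| ≤ ⟪u, c⟫ - ⟪u, e⟫ := by
  set b := ⟪u, c⟫ - ⟪u, e⟫ with hb
  have hbρ : b < ρ := by
    have := real_inner_le_norm u (c - e)
    rw [inner_sub_right, he.norm_eq, one_mul, ← dist_eq_norm, dist_comm] at this
    linarith
  have hb0 : 0 ≤ b := by linarith
  have hpos : 0 < ρ ^ 2 - b ^ 2 := by nlinarith
  have hmem : ∀ η : EuclideanSpace ℝ (Fin 2), ‖η‖ = 1 → ⟪u, η⟫ = 0 →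
      c - b • u + √(ρ ^ 2 - b ^ 2) • η ∈ closure (convexHull ℝ B) := by
    intro η hη huη
    refine he.chord_mem hB hec hBc ?_ ?_
    · rw [inner_add_right, inner_sub_right, inner_smul_right, inner_smul_right, huη,
        inner_self_of_norm_eq_one he.norm_eq]
      linarith
    · rw [dist_eq_norm, show c - b • u + √(ρ ^ 2 - b ^ 2) • η - c =
        √(ρ ^ 2 - b ^ 2) • η - b • u by abel, ← sq_le_sq₀ (norm_nonneg _) (by linarith),
        norm_sub_sq_real, norm_smul, norm_smul, hη, he.norm_eq, real_inner_smul_left,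
        inner_smul_right, real_inner_comm, huη, mul_one, mul_one, Real.norm_eq_abs,
        Real.norm_eq_abs, sq_abs, sq_abs, Real.sq_sqrt hpos.le]
      linarith
  have hle : ∀ η : EuclideanSpace ℝ (Fin 2), ‖η‖ = 1 → ⟪u, η⟫ = 0 →
      ⟪u', c⟫ - ⟪u', e'⟫ + √(ρ ^ 2 - b ^ 2) * ⟪η, u'⟫ ≤ b := by
    intro η hη huη
    have := he'.inner_le _ (hmem η hη huη)
    rw [inner_add_right, inner_sub_right, inner_smul_right, inner_smul_right,
      real_inner_comm η u'] at this
    have hC := real_inner_le_norm u' u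
    rw [he.norm_eq, he'.norm_eq, one_mul] at hC
    nlinarith
  refine ⟨√(ρ ^ 2 - b ^ 2), Real.sqrt_pos.2 hpos, fun η hη huη => ?_⟩
  rcases abs_choice ⟪η, u'⟫ with habs | habs
  · rw [habs]; exact hle η hη huη
  · rw [habs, ← inner_neg_left]
    exact hle (-η) (by rwa [norm_neg]) (by rw [inner_neg_right, huη, neg_zero])

/-- At most one supporting line of the hull cuts off the centre of the disc through a point of
the open disc. -/
theorem IsOuterNormal.eq_of_dist_lt_of_inner_le (hB : Bornology.IsBounded B)
    (hinterior : (interior (closure (convexHull ℝ B))).Nonempty)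
    (he : IsOuterNormal (closure (convexHull ℝ B)) e u) (hec : dist e c < ρ)
    (hBc : ∀ b ∈ B, ρ < dist b c) (huc : ⟪u, e⟫ ≤ ⟪u, c⟫) {e' u' : EuclideanSpace ℝ (Fin 2)}
    (he' : IsOuterNormal (closure (convexHull ℝ B)) e' u') (hec' : dist e' c < ρ)
    (huc' : ⟪u', e'⟫ ≤ ⟪u', c⟫) : u' = u := by
  obtain ⟨η, hη, huη, hdec⟩ := exists_unit_perp he.norm_eq
  obtain ⟨η', hη', huη', -⟩ := exists_unit_perp he'.norm_eq
  obtain ⟨l, hl, h⟩ := he.exists_inner_sub_add_mul_abs_le hB hec hBc huc he'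
  obtain ⟨l', hl', h'⟩ := he'.exists_inner_sub_add_mul_abs_le hB hec' hBc huc' he
  have h₁ := h η hη huη
  have h₂ := h' η' hη' huη'
  have h₃ : 0 ≤ l' * |⟪η', u⟫| := by positivity
  have h₄ : |⟪η, u'⟫| = 0 := by
    have := abs_nonneg ⟪η, u'⟫
    nlinarith
  refine (eq_or_eq_neg_of_inner_perp_eq_zero he.norm_eq he'.norm_eq hdec
    (abs_eq_zero.1 h₄)).resolve_right ?_
  rintro rfl
  obtain ⟨m, hm⟩ := hinterior
  have h₅ := inner_lt_of_mem_interior he.ne_zero hm he.inner_le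
  have h₆ := inner_lt_of_mem_interior he'.ne_zero hm he'.inner_le
  rw [inner_neg_left] at h₆ huc'
  rw [inner_neg_left] at h₆ huc'
  linarith

end Plane

/-- The escape directions at a point of the complement of `B`: the outer normal of the closed
convex hull `M` of `B` outside the interior of `M`, and inside of it the outer normals of `M`
whose supporting lines separate `B` from the centre of a disc attached to a nearest point. -/
def IsEscapeDirection (B Z : Set (EuclideanSpace ℝ (Fin 2)))
    (c : EuclideanSpace ℝ (Fin 2) → EuclideanSpace ℝ (Fin 2))
    (ρ : EuclideanSpace ℝ (Fin 2) → ℝ) (y u : EuclideanSpace ℝ (Fin 2)) : Prop :=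
  (∃ p, ∃ t : ℝ, 0 ≤ t ∧ y = p + t • u ∧ IsOuterNormal (closure (convexHull ℝ B)) p u) ∨
    (y ∈ interior (closure (convexHull ℝ B)) ∧ y ∉ B ∧ ∃ z ∈ Z, infDist y Z = dist y z ∧
      ∃ e, IsOuterNormal (closure (convexHull ℝ B)) e u ∧ dist e (c z) < ρ z ∧ ⟪u, e⟫ ≤ ⟪u, c z⟫)

theorem closeToConvex_of_discs {B Z : Set (EuclideanSpace ℝ (Fin 2))}
    {c : EuclideanSpace ℝ (Fin 2) → EuclideanSpace ℝ (Fin 2)}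
    {ρ : EuclideanSpace ℝ (Fin 2) → ℝ} (hBo : IsOpen B) (hB : Bornology.IsBounded B)
    (hBne : B.Nonempty) (hZ : IsClosed Z) (hZne : Z.Nonempty)
    (hc : ∀ u z z', ⟪u, z⟫ ≤ ⟪u, z'⟫ → ⟪u, c z⟫ ≤ ⟪u, c z'⟫)
    (hcov : ∀ y ∈ interior (closure (convexHull ℝ B)), y ∉ B → ∀ z ∈ Z, infDist y Z = dist y z →
      dist y (c z) ≤ ρ z)
    (hdisj : ∀ z ∈ Z, ∀ b ∈ B, ρ z < dist b (c z))
    (hcM : ∀ z ∈ Z, c z ∉ interior (closure (convexHull ℝ B))) : CloseToConvex B := by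
  set M := closure (convexHull ℝ B) with hM
  have hconv : Convex ℝ M := (convex_convexHull ℝ B).closure
  have hBM : B ⊆ interior M :=
    hBo.subset_interior_iff.2 ((subset_convexHull ℝ B).trans subset_closure)
  have hinterior : (interior M).Nonempty := hBne.mono hBM
  have hforw_inner : ∀ y u z e, y ∈ interior M → y ∉ B → z ∈ Z → infDist y Z = dist y z →
      IsOuterNormal M e u → dist e (c z) < ρ z → ⟪u, e⟫ ≤ ⟪u, c z⟫ → ∀ t : ℝ, 0 < t →
      y + t • u ∉ B ∧ IsEscapeDirection B Z c ρ (y + t • u) u ∧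
        ∀ v, IsEscapeDirection B Z c ρ (y + t • u) v → v = u := by
    intro y u z e hy hyB hz hyz he hec huc t ht
    have huu := inner_self_of_norm_eq_one he.norm_eq
    obtain ⟨τ, hτ⟩ : ∃ τ, τ = ⟪u, e⟫ - ⟪u, y⟫ := ⟨_, rfl⟩
    have hτ0 : 0 < τ := by
      have := inner_lt_of_mem_interior he.ne_zero hy he.inner_le
      linarith
    have hdist : ∀ s, 0 < s → s ≤ τ → dist (y + s • u) (c z) < ρ z := fun s hs hsτ =>
      (dist_add_smul_lt he.norm_eq hs (by linarith)).trans_le (hcov y hy hyB z hz hyz)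
    have hfe : ⟪u, y + τ • u⟫ = ⟪u, e⟫ := by
      rw [inner_add_right, inner_smul_right, huu]; linarith
    have hfM : y + τ • u ∈ M := he.chord_mem hB hec (hdisj z hz) hfe (hdist τ hτ0 le_rfl).le
    have hf : IsOuterNormal M (y + τ • u) u :=
      ⟨he.norm_eq, hfM, fun w hw => (he.inner_le w hw).trans_eq hfe.symm⟩
    rcases lt_or_ge t τ with htτ | htτ
    · have hpB : y + t • u ∉ B := fun h => lt_asymm (hdisj z hz _ h) (hdist t ht htτ.le)
      have hpM : y + t • u ∈ interior M := by
        have := hconv.openSegment_interior_self_subset_interior hy hfM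
        apply this
        rw [openSegment_eq_image']
        refine ⟨t / τ, ⟨by positivity, (div_lt_one hτ0).2 htτ⟩, ?_⟩
        simp only [add_sub_cancel_left, smul_smul, div_mul_cancel₀ _ hτ0.ne']
      have hface : ∀ z' ∈ Z, infDist (y + t • u) Z = dist (y + t • u) z' →
          dist (y + τ • u) (c z') < ρ z' ∧ ⟪u, y + τ • u⟫ ≤ ⟪u, c z'⟫ := by
        intro z' hz' hpz'
        have huz : ⟪u, z⟫ ≤ ⟪u, z'⟫ := inner_le_inner_of_dist_le ht
          (hyz ▸ infDist_le_dist_of_mem hz') (hpz' ▸ infDist_le_dist_of_mem hz)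
        have huc' : ⟪u, e⟫ ≤ ⟪u, c z'⟫ := huc.trans (hc u z z' huz)
        refine ⟨?_, hfe.trans_le huc'⟩
        have hstep := dist_add_smul_lt (p := y + t • u) (c := c z') he.norm_eq
          (sub_pos.2 htτ) (by rw [inner_add_right, inner_smul_right, huu]; linarith)
        rw [show y + t • u + (τ - t) • u = y + τ • u by module] at hstep
        exact hstep.trans_le (hcov _ hpM hpB z' hz' hpz')
      refine ⟨hpB, ?_, ?_⟩
      · obtain ⟨z', hz', hpz'⟩ := hZ.exists_infDist_eq_dist hZne (y + t • u)
        exact Or.inr ⟨hpM, hpB, z', hz', hpz', _, hf, hface z' hz' hpz'⟩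
      · rintro v (⟨p, s, hs, hps, hp⟩ | ⟨-, -, z', hz', hpz', e', he', hec', huc'⟩)
        · exact absurd (hps ▸ hpM) (hp.add_smul_notMem_interior hs)
        · obtain ⟨h₁, h₂⟩ := hface z' hz' hpz'
          exact hf.eq_of_dist_lt_of_inner_le hB hinterior h₁ (hdisj z' hz') h₂ he' hec' huc'
    · have hp : y + t • u = (y + τ • u) + (t - τ) • u := by module
      have hpM : y + t • u ∉ interior M := by
        rw [hp]; exact hf.add_smul_notMem_interior (by linarith)
      refine ⟨fun h => hpM (hBM h), Or.inl ⟨_, _, by linarith, hp, hf⟩, ?_⟩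
      rintro v (⟨p, s, hs, hps, hpv⟩ | ⟨hcon, -⟩)
      · rw [hp] at hps
        rcases htτ.eq_or_lt with rfl | htτ
        · obtain rfl := hf.eq_of_add_smul_eq hpv (by linarith) hs hps
          exact hf.eq_of_dist_lt hB hinterior (hdist _ hτ0 le_rfl) (hdisj z hz) hpv
        · exact hf.eq_normal_of_add_smul_eq hpv (by linarith) hs hps
      · exact absurd hcon hpM
  refine closeToConvex_of_directions (IsEscapeDirection B Z c ρ) ?_ ?_ ?_ ?_
  · intro y hyB
    by_cases hy : y ∈ interior M
    · obtain ⟨z, hz, hyz⟩ := hZ.exists_infDist_eq_dist hZne y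
      obtain ⟨g, hgs, hgM⟩ := (convex_segment y (c z)).isPreconnected
        |>.inter_frontier_nonempty_of_mem_of_notMem (left_mem_segment ℝ y (c z))
          (right_mem_segment ℝ y (c z)) hy (hcM z hz)
      have hgi : g ∉ interior M := by simpa using hgM.2
      have hgM' : g ∈ M := by
        have := closure_mono interior_subset hgM.1
        rwa [hM, closure_closure] at this
      obtain ⟨u, hu, hsupp⟩ := exists_unit_forall_inner_le hconv hinterior hgi
      have hg : IsOuterNormal M g u := ⟨hu, hgM', hsupp⟩
      have hlt := inner_lt_of_mem_interior hg.ne_zero hy hsupp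
      have hyc := hcov y hy hyB z hz hyz
      have hsum := dist_add_dist_of_mem_segment hgs
      have hyg : 0 < dist y g := dist_pos.2 fun h => hgi (h ▸ hy)
      refine ⟨u, Or.inr ⟨hy, hyB, z, hz, hyz, g, hg, by linarith, ?_⟩⟩
      obtain ⟨a, b, ha, hb, hab, rfl⟩ := hgs
      rw [inner_add_right, inner_smul_right, inner_smul_right] at hlt ⊢
      obtain rfl : b = 1 - a := by linarith
      have : 0 < (1 - a) * (⟪u, c z⟫ - ⟪u, y⟫) := by linarith
      have := pos_of_mul_pos_right this hb
      nlinarith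
    · obtain ⟨p, u, t, ht, hyp, hp⟩ :=
        exists_isOuterNormal_add_smul hconv isClosed_closure hinterior hy
      exact ⟨u, Or.inl ⟨p, t, ht, hyp, hp⟩⟩
  · rintro y u (⟨p, t, -, -, hp⟩ | ⟨-, -, z, -, -, e, he, -⟩)
    · exact hp.ne_zero
    · exact he.ne_zero
  · intro y u hyu
    have hu : ‖u‖ = 1 := by
      rcases hyu with ⟨p, t, -, -, hp⟩ | ⟨-, -, z, -, -, e, he, -⟩
      exacts [hp.norm_eq, he.norm_eq]
    obtain ⟨C, hC⟩ := (isBounded_convexHull.2 hB).closure.exists_norm_le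
    have hlow : ∀ p ∈ M, -C ≤ ⟪u, p⟫ := by
      intro p hp
      have := abs_real_inner_le_norm u p
      rw [hu, one_mul] at this
      exact (abs_le.1 (this.trans (hC p hp))).1
    have hlow' : ∀ w, IsEscapeDirection B Z c ρ w u → -C ≤ ⟪u, w⟫ := by
      rintro w (⟨p, t, ht, rfl, hp⟩ | ⟨hw, -⟩)
      · rw [inner_add_right, inner_smul_right, inner_self_of_norm_eq_one hu]
        linarith [hlow p hp.mem]
      · exact hlow w (interior_subset hw)
    refine ⟨⟪u, y⟫ + C + 1, fun h => ?_⟩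
    have := hlow' _ h
    rw [inner_sub_right, inner_smul_right, inner_self_of_norm_eq_one hu] at this
    linarith
  · rintro y hyB u (⟨p, s, hs, rfl, hp⟩ | ⟨hy, -, z, hz, hyz, e, he, hec, huc⟩) t ht
    · have hq : p + s • u + t • u = p + (s + t) • u := by module
      have hqM : p + s • u + t • u ∉ interior M := by
        rw [hq]; exact hp.add_smul_notMem_interior (by linarith)
      refine ⟨fun h => hqM (hBM h), Or.inl ⟨p, s + t, by linarith, hq, hp⟩, ?_⟩
      rintro v (⟨p', s', hs', hps', hp'⟩ | ⟨hcon, -⟩)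
      · rw [hq] at hps'
        exact hp.eq_normal_of_add_smul_eq hp' (by linarith) hs' hps'
      · exact absurd hcon hqM
    · exact hforw_inner y u z e hy hyB hz hyz he hec huc t ht

theorem isOpen_jRegion {E : Type*} [NormedAddCommGroup E] (Z : Set E) (x : E) (R : ℝ) :
    IsOpen (jRegion Z x R) := by
  have h₁ : IsOpen {y | dist x y < R * infDist x Z} := isOpen_lt (by fun_prop) (by fun_prop)
  have h₂ : IsOpen {y | dist x y < R * infDist y Z} :=
    isOpen_lt (by fun_prop) (continuous_const.mul (continuous_infDist_pt Z))
  exact h₁.inter h₂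

theorem closeToConvex_jRegion_plane {Z : Set (EuclideanSpace ℝ (Fin 2))} (hZ : IsClosed Z)
    (hZne : Z.Nonempty) {x : EuclideanSpace ℝ (Fin 2)} (hx : x ∉ Z) {R : ℝ} (hR : 1 < R)
    (hR3 : R ^ 2 ≤ 3) : CloseToConvex (jRegion Z x R) := by
  have hd : 0 < infDist x Z := (hZ.notMem_iff_infDist_pos hZne).1 hx
  have hq : 0 < R ^ 2 - 1 := by nlinarith
  have hsub : jRegion Z x R ⊆ closedBall x (R * infDist x Z) := by
    rintro y ⟨h, -⟩
    rw [mem_closedBall, dist_comm]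
    exact h.le
  have hdisj : ∀ z ∈ Z, ∀ b ∈ jRegion Z x R,
      R / (R ^ 2 - 1) * dist z x < dist b (x + (R ^ 2 / (R ^ 2 - 1)) • (z - x)) := by
    rintro z hz b ⟨-, hb⟩
    rw [← not_le, ← mul_dist_le_dist_iff x b z hR, not_le, dist_comm b x]
    exact hb.trans_le (mul_le_mul_of_nonneg_left (infDist_le_dist_of_mem hz) (by linarith))
  refine closeToConvex_of_discs (c := fun z => x + (R ^ 2 / (R ^ 2 - 1)) • (z - x))
    (ρ := fun z => R / (R ^ 2 - 1) * dist z x) (isOpen_jRegion Z x R)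
    (isBounded_closedBall.subset hsub) ⟨x, ?_⟩ hZ hZne ?_ ?_ hdisj ?_
  · have : 0 < R * infDist x Z := by positivity
    exact ⟨by rwa [dist_self], by rwa [dist_self]⟩
  · intro u z z' h
    simp only [inner_add_right, inner_smul_right, inner_sub_right]
    gcongr
  · intro y hy hyB z hz hyz
    rw [← mul_dist_le_dist_iff x y z hR]
    have hball : y ∈ ball x (R * infDist x Z) := by
      rw [← interior_closedBall x (by positivity)]
      exact interior_mono
        (closure_minimal (convexHull_min hsub (convex_closedBall _ _)) isClosed_closedBall) hy
    rw [mem_ball, dist_comm] at hball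
    by_contra! h
    exact hyB ⟨hball, by rwa [hyz, dist_comm x y]⟩
  · intro z hz hcon
    have hzx : z - x ≠ 0 := sub_ne_zero.2 fun h => hx (h ▸ hz)
    have hs : infDist x Z ≤ dist z x := by
      rw [dist_comm]; exact infDist_le_dist_of_mem hz
    set k := R ^ 2 / (R ^ 2 - 1) with hk
    have hkpos : 0 < k := by positivity
    have hkq : k * (R ^ 2 - 1) = R ^ 2 := div_mul_cancel₀ _ hq.ne'
    have hle : ∀ w ∈ jRegion Z x R, ⟪z - x, w⟫ ≤ ⟪z - x, x + k • (z - x)⟫ := by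
      intro w hw
      have h₁ : dist w x ^ 2 ≤ R ^ 2 * dist z x ^ 2 := by
        rw [← mul_pow]
        have := hw.1
        rw [dist_comm] at this
        exact pow_le_pow_left₀ dist_nonneg (this.le.trans (by gcongr)) 2
      have h₂ : dist w x ^ 2 < (R * dist w z) ^ 2 := by
        have := hdisj z hz w hw
        rw [← not_le, ← mul_dist_le_dist_iff x w z hR, not_le] at this
        exact pow_lt_pow_left₀ this dist_nonneg two_ne_zero
      rw [dist_eq_norm, dist_eq_norm, mul_pow, show w - z = (w - x) - (z - x) by abel,
        norm_sub_sq_real (w - x)] at h₂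
      rw [dist_eq_norm, dist_eq_norm] at h₁
      rw [← sub_nonpos, ← inner_sub_right,
        show w - (x + k • (z - x)) = (w - x) - k • (z - x) by abel,
        inner_sub_right, inner_smul_right, real_inner_self_eq_norm_sq, real_inner_comm]
      have hR0 : 0 < R ^ 2 := by positivity
      have hk2 : R ^ 2 ≤ 2 * k := by nlinarith
      have h₃ : (R ^ 2 - 1) * ‖w - x‖ ^ 2 ≤ (R ^ 2 - 1) * (R ^ 2 * ‖z - x‖ ^ 2) := by gcongr
      have h₄ : ⟪w - x, z - x⟫ < R ^ 2 / 2 * ‖z - x‖ ^ 2 := by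
        refine lt_of_mul_lt_mul_left (a := R ^ 2) ?_ hR0.le
        linarith
      have h₅ : R ^ 2 * ‖z - x‖ ^ 2 ≤ 2 * k * ‖z - x‖ ^ 2 := by gcongr
      linarith
    have hclosed : IsClosed {w | ⟪z - x, w⟫ ≤ ⟪z - x, x + k • (z - x)⟫} :=
      isClosed_le (by fun_prop) (by fun_prop)
    have hhalf : ∀ w ∈ closure (convexHull ℝ (jRegion Z x R)),
        ⟪z - x, w⟫ ≤ ⟪z - x, x + k • (z - x)⟫ :=
      closure_minimal (convexHull_min hle (convex_halfSpace_le (innerₛₗ ℝ (z - x)).isLinear _))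
        hclosed
    exact lt_irrefl _ (inner_lt_of_mem_interior hzx hcon hhalf)

/-- Klén, Theorem 1.4 (first part) / Theorem 3.3: for a proper nonempty open connected
subdomain `G ⊊ ℝⁿ`, `n ≥ 2`, `x ∈ G` and `0 < r ≤ log (1 + √3)`, the `j`-metric ball
`B_j(x,r)` is close-to-convex. -/
theorem jBall_closeToConvex_of_general_domain {n : ℕ} (hn : 2 ≤ n)
    (G : Set (EuclideanSpace ℝ (Fin n))) (hGopen : IsOpen G) (hGconn : IsConnected G)
    (hGproper : G ≠ Set.univ) (x : EuclideanSpace ℝ (Fin n)) (hx : x ∈ G)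
    (r : ℝ) (hr0 : 0 < r) (hr : r ≤ Real.log (1 + Real.sqrt 3)) :
    CloseToConvex (jBall G x r) := by
  have hR0 : 0 < Real.exp r - 1 := sub_pos.2 (Real.one_lt_exp_iff.2 hr0)
  have hR : Real.exp r - 1 ≤ √3 := by
    rw [Real.le_log_iff_exp_le (by positivity)] at hr
    linarith
  have hR3 : (Real.exp r - 1) ^ 2 ≤ 3 := (Real.le_sqrt hR0.le (by norm_num)).1 hR
  have hR2 : Real.exp r - 1 < 2 := by nlinarith
  have hZne : (frontier G).Nonempty := nonempty_frontier_iff.2 ⟨⟨x, hx⟩, hGproper⟩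
  have hxZ : x ∉ frontier G := fun h => h.2 (by rwa [hGopen.interior_eq])
  have hxB : x ∈ jBall G x r := ⟨hx, by simpa [jDist] using hr0⟩
  rw [jBall_eq_jRegion hGopen hGproper hx hR2] at hxB ⊢
  rcases le_or_gt (Real.exp r - 1) 1 with hR1 | hR1
  · exact closeToConvex_of_starConvex hxB (starConvex_jRegion _ x hR0.le hR1)
  rcases hn.eq_or_lt with rfl | hn
  · exact closeToConvex_jRegion_plane isClosed_frontier hZne hxZ hR1 hR3
  · exact closeToConvex_jRegion_of_three_le hn isClosed_frontier hZne hxZ hR1 hR2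
end

section
/- Let G = ℝ² \ {0}, let x ∈ G and let r > λ. Then the quasihyperbolic disk B_k(x,r) is not close-to-convex. -/
/-- The quasihyperbolic metric of the punctured space `ℝⁿ \ {0}` (Martin–Osgood formula):
`k(x,y) = √(α² + log²(|x|/|y|))` where `α ∈ [0,π]` is the angle between `[x,0]` and `[0,y]`. -/
noncomputable def qhDist {E : Type*} [NormedAddCommGroup E] [InnerProductSpace ℝ E]
    (x y : E) : ℝ :=
  Real.sqrt ((InnerProductGeometry.angle x y) ^ 2 + (Real.log (‖x‖ / ‖y‖)) ^ 2)

/-- The quasihyperbolic ball `B_k(x,r) = {y ∈ ℝⁿ \ {0} : k(x,y) < r}` of the punctured space. -/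
def kBall {E : Type*} [NormedAddCommGroup E] [InnerProductSpace ℝ E] (x : E) (r : ℝ) : Set E :=
  {y | y ≠ 0 ∧ qhDist x y < r}


open Real InnerProductGeometry

/-- The points `exp (s₁ + i α₁)` and `exp (s₂ + i α₂)`, both on the image under the exponential of
the circle of radius `r`, such that the inner one lies strictly higher than the outer one. -/
lemma exists_higher_inner_point {lam r : ℝ} (hlam : lam ∈ Set.Ioo 2 π)
    (hlam0 : cos √(lam ^ 2 - 1) + √(lam ^ 2 - 1) * sin √(lam ^ 2 - 1) = 0) (hr : lam < r) :
    ∃ s₁ s₂ α₁ α₂ : ℝ, s₂ < s₁ ∧ s₁ ^ 2 + α₁ ^ 2 = r ^ 2 ∧ s₂ ^ 2 + α₂ ^ 2 = r ^ 2 ∧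
      π / 2 ≤ α₁ ∧ α₁ ≤ π ∧ 0 ≤ α₂ ∧ α₂ ≤ π ∧ exp s₁ * sin α₁ < exp s₂ * sin α₂ := by
  obtain ⟨h2, hlampi⟩ := hlam
  have hpi := pi_pos
  rcases le_or_gt π r with hrpi | hrpi
  · have h1 : 0 ≤ r ^ 2 - π ^ 2 := by nlinarith
    have h2 : r ^ 2 - π ^ 2 < r ^ 2 - (π / 2) ^ 2 := by nlinarith
    refine ⟨-√(r ^ 2 - π ^ 2), -√(r ^ 2 - (π / 2) ^ 2), π, π / 2,
      neg_lt_neg (sqrt_lt_sqrt h1 h2), ?_, ?_, by linarith, le_rfl, by linarith, by linarith, ?_⟩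
    · rw [neg_sq, sq_sqrt h1]; ring
    · rw [neg_sq, sq_sqrt (h1.trans h2.le)]; ring
    · simp [exp_pos]
  · have hmono : √(lam ^ 2 - 1) < √(r ^ 2 - 1) := sqrt_lt_sqrt (by nlinarith) (by nlinarith)
    have hlow : π / 2 ≤ √(lam ^ 2 - 1) := by
      apply le_sqrt_of_sq_le
      nlinarith [pi_lt_d2]
    have hupp : √(r ^ 2 - 1) ≤ π := by
      rw [sqrt_le_left hpi.le]; nlinarith
    have hanti : StrictAntiOn (fun u : ℝ => cos u + u * sin u) (Set.Icc (π / 2) π) := by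
      apply strictAntiOn_of_deriv_neg (convex_Icc _ _) (by fun_prop)
      intro u hu
      rw [interior_Icc] at hu
      have hd : HasDerivAt (fun u : ℝ => cos u + u * sin u)
          (-sin u + (1 * sin u + u * cos u)) u :=
        (hasDerivAt_cos u).add ((hasDerivAt_id' u).mul (hasDerivAt_sin u))
      rw [hd.deriv]
      have : cos u < 0 := cos_neg_of_pi_div_two_lt_of_lt hu.1 (by linarith [hu.2])
      nlinarith [hu.1]
    set a := √(r ^ 2 - 1) with ha
    have hapos : 0 < a := by linarith
    have hneg : cos a + a * sin a < 0 := by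
      have := hanti ⟨hlow, by linarith⟩ ⟨by linarith, hupp⟩ hmono
      simpa only [hlam0] using this
    have hd : HasDerivAt (fun s : ℝ => exp s * sin √(r ^ 2 - s ^ 2))
        (exp (-1) * ((cos a + a * sin a) / a)) (-1) := by
      have hne : r ^ 2 - (-1 : ℝ) ^ 2 ≠ 0 := by nlinarith
      have h := (hasDerivAt_exp (-1)).mul
        ((((hasDerivAt_pow 2 (-1 : ℝ)).const_sub (r ^ 2)).sqrt hne).sin)
      refine h.congr_deriv ?_
      have : r ^ 2 - (-1 : ℝ) ^ 2 = r ^ 2 - 1 := by ring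
      rw [this, ← ha]
      field_simp
      ring
    have hdneg : exp (-1) * ((cos a + a * sin a) / a) < 0 :=
      mul_neg_of_pos_of_neg (exp_pos _) (div_neg_of_neg_of_pos hneg hapos)
    have hslope := (hasDerivAt_iff_tendsto_slope.1 hd).mono_left
      (nhdsWithin_mono (-1) (s := Set.Iio (-1)) fun y hy => ne_of_lt hy)
    have hev := hslope.eventually (gt_mem_nhds hdneg)
    have hev2 : ∀ᶠ s in nhdsWithin (-1 : ℝ) (Set.Iio (-1)), -2 < s :=
      nhdsWithin_le_nhds (lt_mem_nhds (by norm_num))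
    obtain ⟨s, ⟨hs, hs2⟩, hs1⟩ := ((hev.and hev2).and self_mem_nhdsWithin).exists
    have hs1 : s < -1 := hs1
    have hrs : 0 ≤ r ^ 2 - s ^ 2 := by nlinarith
    refine ⟨-1, s, a, √(r ^ 2 - s ^ 2), hs1, ?_, ?_, by linarith, hupp, sqrt_nonneg _, ?_, ?_⟩
    · rw [ha, sq_sqrt (by nlinarith)]; ring
    · rw [sq_sqrt hrs]; ring
    · rw [sqrt_le_left hpi.le]; nlinarith
    · rw [slope_def_field, div_neg_iff] at hs
      have : r ^ 2 - (-1 : ℝ) ^ 2 = r ^ 2 - 1 := by ring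
      rw [this, ← ha] at hs
      rcases hs with hs | hs <;> linarith

lemma exists_norm_add_smul_eq {E : Type*} [NormedAddCommGroup E] [NormedSpace ℝ E]
    {p d : E} (hd : d ≠ 0) {ρ : ℝ} (hp : ‖p‖ < ρ) : ∃ t : ℝ, 0 < t ∧ ‖p + t • d‖ = ρ := by
  have hd' : 0 < ‖d‖ := norm_pos_iff.2 hd
  have hT : 0 ≤ (‖p‖ + ρ) / ‖d‖ :=
    div_nonneg (by linarith [norm_nonneg p]) hd'.le
  have hfar : ρ ≤ ‖p + ((‖p‖ + ρ) / ‖d‖) • d‖ := by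
    have h := norm_sub_le (p + ((‖p‖ + ρ) / ‖d‖) • d) p
    rw [add_sub_cancel_left, norm_smul, Real.norm_of_nonneg hT, div_mul_cancel₀ _ hd'.ne'] at h
    linarith
  obtain ⟨t, ht, hte⟩ := intermediate_value_Icc hT
    (f := fun t : ℝ => ‖p + t • d‖) (by fun_prop) ⟨by simpa using hp.le, hfar⟩
  refine ⟨t, lt_of_le_of_ne ht.1 ?_, hte⟩
  rintro rfl
  simp at hte
  linarith

/-- Beyond one of its points, a half-line continues to infinity in a fixed direction. -/
lemma IsHalfLine.exists_direction {E : Type*} [AddCommGroup E] [Module ℝ E] {S : Set E}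
    (hS : IsHalfLine S) : ∃ d : E, d ≠ 0 ∧ ∀ p ∈ S, ∀ t : ℝ, 0 ≤ t → p + t • d ∈ S := by
  obtain ⟨z, d, hd, rfl | rfl⟩ := hS <;> refine ⟨d, hd, ?_⟩ <;> rintro _ ⟨u, hu, rfl⟩ t ht <;>
    exact ⟨u + t, by positivity, by rw [add_smul, add_assoc]⟩

lemma notMem_kBall_iff {E : Type*} [NormedAddCommGroup E] [InnerProductSpace ℝ E]
    {x q : E} {r s : ℝ} (hx : x ≠ 0) (hr : 0 ≤ r) (hq : ‖q‖ = exp s * ‖x‖) :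
    q ∉ kBall x r ↔ r ^ 2 ≤ angle x q ^ 2 + s ^ 2 := by
  have hx' : 0 < ‖x‖ := norm_pos_iff.2 hx
  have hq0 : q ≠ 0 := by rw [← norm_pos_iff, hq]; positivity
  have hlog : log (‖x‖ / ‖q‖) = -s := by
    rw [hq, div_mul_cancel_right₀ hx'.ne', log_inv, log_exp]
  rw [kBall, Set.mem_ofPred_eq, qhDist, hlog, neg_sq, not_and, not_lt, le_sqrt hr (by positivity)]
  exact ⟨fun h => h hq0, fun h _ => h⟩

/-- The planar cross product. -/
def planeCross (x w : EuclideanSpace ℝ (Fin 2)) : ℝ := x 0 * w 1 - x 1 * w 0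

/-- The plane vector whose polar coordinates relative to `x` are `exp s` and `β`. -/
noncomputable def polarPoint (x : EuclideanSpace ℝ (Fin 2)) (s β : ℝ) :
    EuclideanSpace ℝ (Fin 2) :=
  !₂[exp s * (cos β * x 0 - sin β * x 1), exp s * (cos β * x 1 + sin β * x 0)]

lemma inner_plane (x w : EuclideanSpace ℝ (Fin 2)) : inner ℝ x w = x 0 * w 0 + x 1 * w 1 := by
  simp [PiLp.inner_apply, Fin.sum_univ_two, mul_comm]

lemma norm_sq_plane (x : EuclideanSpace ℝ (Fin 2)) : ‖x‖ ^ 2 = x 0 ^ 2 + x 1 ^ 2 := by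
  simp [EuclideanSpace.norm_sq_eq, Fin.sum_univ_two]

lemma inner_sq_add_planeCross_sq (x w : EuclideanSpace ℝ (Fin 2)) :
    inner ℝ x w ^ 2 + planeCross x w ^ 2 = ‖x‖ ^ 2 * ‖w‖ ^ 2 := by
  rw [inner_plane, planeCross, norm_sq_plane, norm_sq_plane]
  ring

lemma inner_polarPoint (x : EuclideanSpace ℝ (Fin 2)) (s β : ℝ) :
    inner ℝ x (polarPoint x s β) = ‖x‖ ^ 2 * (exp s * cos β) := by
  rw [inner_plane, norm_sq_plane]
  simp [polarPoint]
  ring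

lemma planeCross_polarPoint (x : EuclideanSpace ℝ (Fin 2)) (s β : ℝ) :
    planeCross x (polarPoint x s β) = ‖x‖ ^ 2 * (exp s * sin β) := by
  rw [planeCross, norm_sq_plane]
  simp [polarPoint]
  ring

lemma norm_polarPoint (x : EuclideanSpace ℝ (Fin 2)) (s β : ℝ) :
    ‖polarPoint x s β‖ = exp s * ‖x‖ := by
  rw [← sq_eq_sq₀ (norm_nonneg _) (by positivity), mul_pow, norm_sq_plane, norm_sq_plane]
  simp [polarPoint]
  linear_combination exp s ^ 2 * (x 0 ^ 2 + x 1 ^ 2) * sin_sq_add_cos_sq β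

lemma angle_polarPoint {x : EuclideanSpace ℝ (Fin 2)} (hx : x ≠ 0) (s β : ℝ) :
    angle x (polarPoint x s β) = arccos (cos β) := by
  have hx' : 0 < ‖x‖ := norm_pos_iff.2 hx
  rw [angle, inner_polarPoint, norm_polarPoint]
  congr 1
  have := exp_pos s
  field_simp

lemma plane_ext {x p q : EuclideanSpace ℝ (Fin 2)} (hx : x ≠ 0)
    (hinner : inner ℝ x p = inner ℝ x q) (hcross : planeCross x p = planeCross x q) : p = q := by
  have h := inner_sq_add_planeCross_sq x (p - q)
  have h1 : inner ℝ x (p - q) = 0 := by rw [inner_sub_right, hinner, sub_self]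
  have h2 : planeCross x (p - q) = 0 := by
    simp only [planeCross, PiLp.sub_apply] at hcross ⊢
    linarith
  rw [h1, h2] at h
  have hx' := norm_pos_iff.2 hx
  have : ‖p - q‖ = 0 := by
    by_contra hne
    have := (norm_nonneg (p - q)).lt_of_ne' hne
    have : 0 < ‖x‖ ^ 2 * ‖p - q‖ ^ 2 := by positivity
    linarith
  exact sub_eq_zero.1 (norm_eq_zero.1 this)

lemma planeCross_add_smul (x p d : EuclideanSpace ℝ (Fin 2)) (t : ℝ) :
    planeCross x (p + t • d) = planeCross x p + t * planeCross x d := by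
  simp [planeCross]
  ring

/-- A ray that leaves the circle of radius `exp s₁ * ‖x‖` outside the quasihyperbolic disk, from an
inner point higher than the gap in the disk, moves backwards and towards the axis. -/
lemma direction_signs {x p d : EuclideanSpace ℝ (Fin 2)} {r s₁ s₂ α₁ : ℝ} (hx : x ≠ 0)
    (hr : 0 ≤ r) (hd : d ≠ 0) (hs : s₂ < s₁) (hα : s₁ ^ 2 + α₁ ^ 2 = r ^ 2) (hα₁ : π / 2 ≤ α₁)
    (hα₁' : α₁ ≤ π) (hp : ‖p‖ = exp s₂ * ‖x‖)
    (hcross : (‖x‖ ^ 2 * (exp s₁ * sin α₁)) ^ 2 < planeCross x p ^ 2)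
    (hray : ∀ t : ℝ, 0 ≤ t → p + t • d ∉ kBall x r) :
    inner ℝ x d < 0 ∧ planeCross x p * planeCross x d < 0 := by
  have hx' : 0 < ‖x‖ := norm_pos_iff.2 hx
  have hexp : exp s₂ < exp s₁ := exp_lt_exp.2 hs
  have hlt : ‖p‖ < exp s₁ * ‖x‖ := by rw [hp]; gcongr
  obtain ⟨t, ht, htq⟩ := exists_norm_add_smul_eq hd hlt
  have hq := (notMem_kBall_iff hx hr htq).1 (hray t ht.le)
  have hangle : α₁ ≤ angle x (p + t • d) :=
    le_of_abs_le (abs_le_of_sq_le_sq (by linarith) (angle_nonneg _ _))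
  have hcos : cos (angle x (p + t • d)) ≤ cos α₁ :=
    cos_le_cos_of_nonneg_of_le_pi (by linarith [pi_pos]) (angle_le_pi _ _) hangle
  have hcos1 : cos α₁ ≤ 0 := cos_nonpos_of_pi_div_two_le_of_le hα₁ (by linarith [pi_pos])
  have hinner : inner ℝ x (p + t • d) ≤ ‖x‖ ^ 2 * (exp s₁ * cos α₁) := by
    rw [← cos_angle_mul_norm_mul_norm, htq]
    calc _ = ‖x‖ ^ 2 * (exp s₁ * cos (angle x (p + t • d))) := by ring
      _ ≤ _ := by gcongr
  have hneg : ‖x‖ ^ 2 * (exp s₁ * cos α₁) ≤ 0 :=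
    mul_nonpos_of_nonneg_of_nonpos (by positivity)
      (mul_nonpos_of_nonneg_of_nonpos (exp_pos _).le hcos1)
  have hinner2 : (‖x‖ ^ 2 * (exp s₁ * cos α₁)) ^ 2 ≤ inner ℝ x (p + t • d) ^ 2 := by nlinarith
  have htrig : (‖x‖ ^ 2 * (exp s₁ * cos α₁)) ^ 2 + (‖x‖ ^ 2 * (exp s₁ * sin α₁)) ^ 2
      = ‖x‖ ^ 2 * (exp s₁ * ‖x‖) ^ 2 := by
    linear_combination (‖x‖ ^ 2 * exp s₁) ^ 2 * sin_sq_add_cos_sq α₁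
  have hpyp := inner_sq_add_planeCross_sq x p
  have hpyq := inner_sq_add_planeCross_sq x (p + t • d)
  rw [htq] at hpyq
  have hpq : ‖x‖ ^ 2 * ‖p‖ ^ 2 < ‖x‖ ^ 2 * (exp s₁ * ‖x‖) ^ 2 := by gcongr
  constructor
  · have habs : |inner ℝ x p| < |inner ℝ x (p + t • d)| := sq_lt_sq.1 (by linarith)
    rw [abs_of_nonpos (hinner.trans hneg), abs_lt] at habs
    rw [inner_add_right, inner_smul_right] at habs
    by_contra! hcon
    nlinarith [mul_nonneg ht.le hcon, habs.1]
  · have hsq : planeCross x (p + t • d) ^ 2 < planeCross x p ^ 2 := by linarith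
    rw [planeCross_add_smul] at hsq
    by_contra! hcon
    nlinarith [mul_nonneg ht.le hcon, sq_nonneg (t * planeCross x d)]

/-- Klén, Theorem 3.2 (sharpness): in the punctured plane `G = ℝ² \ {0}`, for `x ∈ G` and
`r > λ`, where `λ ∈ (2,π)` solves `cos √(z²-1) + √(z²-1) sin √(z²-1) = 0`,
the quasihyperbolic disk `B_k(x,r)` is not close-to-convex. -/
theorem kBall_not_closeToConvex_of_puncturedPlane
    (lam : ℝ) (hlam : lam ∈ Set.Ioo 2 Real.pi)
    (hlam0 : Real.cos (Real.sqrt (lam ^ 2 - 1))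
      + Real.sqrt (lam ^ 2 - 1) * Real.sin (Real.sqrt (lam ^ 2 - 1)) = 0)
    (x : EuclideanSpace ℝ (Fin 2)) (hx : x ≠ 0)
    (r : ℝ) (hr : lam < r) :
    ¬ CloseToConvex (kBall x r) := by
  rintro ⟨𝒞, hhalf, hdisj, hcover⟩
  have hr0 : 0 ≤ r := by linarith [hlam.1]
  have hx' : 0 < ‖x‖ := norm_pos_iff.2 hx
  obtain ⟨s₁, s₂, α₁, α₂, hs, h1, h2, hα₁, hα₁', hα₂, hα₂', hlt⟩ :=
    exists_higher_inner_point hlam hlam0 hr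
  have hsin₁ : 0 ≤ sin α₁ := sin_nonneg_of_nonneg_of_le_pi (by linarith [pi_pos]) hα₁'
  have hsin₁' : 0 ≤ exp s₁ * sin α₁ := mul_nonneg (exp_pos _).le hsin₁
  have hcompl : ∀ S ∈ 𝒞, ∀ q ∈ S, q ∉ kBall x r := fun S hS q hq =>
    (hcover ▸ Set.mem_sUnion_of_mem hq hS : q ∈ (kBall x r)ᶜ)
  have hmem : ∀ β, cos β = cos α₂ → ∃ S ∈ 𝒞, polarPoint x s₂ β ∈ S := by
    intro β hβ
    have hnot : polarPoint x s₂ β ∈ (kBall x r)ᶜ := by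
      refine (notMem_kBall_iff hx hr0 (norm_polarPoint x s₂ β)).2 ?_
      rw [angle_polarPoint hx, hβ, arccos_cos hα₂ hα₂']
      linarith
    rwa [← hcover] at hnot
  have hsigns : ∀ β, sin β ^ 2 = sin α₂ ^ 2 → ∀ S ∈ 𝒞, polarPoint x s₂ β ∈ S → ∀ d, d ≠ 0 →
      (∀ p ∈ S, ∀ t : ℝ, 0 ≤ t → p + t • d ∈ S) →
      inner ℝ x d < 0 ∧ planeCross x (polarPoint x s₂ β) * planeCross x d < 0 := by
    intro β hβ S hS hpS d hd hfwd
    refine direction_signs hx hr0 hd hs h1 hα₁ hα₁' (norm_polarPoint x s₂ β) ?_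
      fun t ht => hcompl S hS _ (hfwd _ hpS t ht)
    rw [planeCross_polarPoint, mul_pow _ (exp s₂ * _), mul_pow _ (sin β), hβ, ← mul_pow, ← mul_pow]
    gcongr
  obtain ⟨S, hS, hpS⟩ := hmem α₂ rfl
  obtain ⟨T, hT, hpT⟩ := hmem (-α₂) (cos_neg _)
  obtain ⟨d, hd, hdS⟩ := (hhalf S hS).exists_direction
  obtain ⟨e, he, heT⟩ := (hhalf T hT).exists_direction
  obtain ⟨hd1, hd2⟩ := hsigns _ rfl S hS hpS d hd hdS
  obtain ⟨he1, he2⟩ := hsigns _ (by simp) T hT hpT e he heT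
  have hpos : 0 < ‖x‖ ^ 2 * (exp s₂ * sin α₂) := mul_pos (by positivity) (hsin₁'.trans_lt hlt)
  have hopp : planeCross x (polarPoint x s₂ (-α₂)) = -(‖x‖ ^ 2 * (exp s₂ * sin α₂)) := by
    rw [planeCross_polarPoint, sin_neg]; ring
  have hd2' : planeCross x d < 0 := by
    rw [planeCross_polarPoint] at hd2
    exact neg_of_mul_neg_right hd2 hpos.le
  have he_pos : ∀ e, planeCross x (polarPoint x s₂ (-α₂)) * planeCross x e < 0 →
      0 < planeCross x e := by
    intro e he
    rw [hopp] at he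
    by_contra! hcon
    nlinarith
  have he2' := he_pos e he2
  by_cases hST : S = T
  · subst hST
    exact lt_asymm hd2' (he_pos d (hsigns _ (by simp) S hS hpT d hd hdS).2)
  · set D := inner ℝ x e * planeCross x d - inner ℝ x d * planeCross x e with hD
    have hDpos : 0 < D := by
      nlinarith [mul_pos_of_neg_of_neg he1 hd2', mul_neg_of_neg_of_pos hd1 he2']
    set c := 2 * (‖x‖ ^ 2 * (exp s₂ * sin α₂)) / D with hc
    have hcpos : 0 < c := by positivity
    have hcD : c * D = 2 * (‖x‖ ^ 2 * (exp s₂ * sin α₂)) := div_mul_cancel₀ _ hDpos.ne'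
    have hmeet : polarPoint x s₂ α₂ + (c * -inner ℝ x e) • d
        = polarPoint x s₂ (-α₂) + (c * -inner ℝ x d) • e := by
      refine plane_ext hx ?_ ?_
      · simp only [inner_add_right, inner_smul_right, inner_polarPoint, cos_neg]
        ring
      · rw [planeCross_add_smul, planeCross_add_smul, hopp, planeCross_polarPoint]
        linear_combination -hcD
    refine Set.disjoint_left.1 (hdisj hS hT hST)
      (hdS _ hpS (c * -inner ℝ x e) (mul_nonneg hcpos.le (by linarith))) ?_
    rw [hmeet]
    exact heT _ hpT _ (mul_nonneg hcpos.le (by linarith))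
end
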